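/- Let B be the open unit ball of ℝ^m (m ≥ 2), and let u, v : B → [-∞, +∞) be subharmonic functions with associated Riesz measures Δu and Δv. Suppose v ≤ u on B and the measure Δu gives zero mass to the set {x ∈ B : u(x) ≠ -∞}. Then Δv ≥ Δu as measures on B. -/

import Mathlib

open MeasureTheory Metric Filter Topology

noncomputable section

variable {m : ℕ}

/-- Second derivative of `f : ℝ^m → ℝ` at `x` in direction `v`. -/
def secondDeriv (f : EuclideanSpace ℝ (Fin m) → ℝ) (x v : EuclideanSpace ℝ (Fin m)) : ℝ :=
  fderiv ℝ (fun y => fderiv ℝ f y v) x v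

/-- The Laplacian of `f : ℝ^m → ℝ` at `x`: the sum of the pure second derivatives in the
coordinate directions. -/
def lap (f : EuclideanSpace ℝ (Fin m) → ℝ) (x : EuclideanSpace ℝ (Fin m)) : ℝ :=
  ∑ i : Fin m, secondDeriv f x (EuclideanSpace.single i 1)

/-- `h` is harmonic at `x`: twice continuously differentiable with vanishing Laplacian. -/
def HarmonicAt (h : EuclideanSpace ℝ (Fin m) → ℝ) (x : EuclideanSpace ℝ (Fin m)) : Prop :=
  ContDiffAt ℝ 2 h x ∧ lap h x = 0

/-- `u : B → [-∞, +∞)` is subharmonic on `B`: it is upper semicontinuous on `B`, takes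
values in `[-∞, +∞)`, is not identically `-∞`, and satisfies the harmonic-majorization
property: on any closed ball inside `B`, any continuous function harmonic inside that
dominates `u` on the boundary sphere dominates `u` throughout the ball. -/
def SubharmonicOn (u : EuclideanSpace ℝ (Fin m) → EReal)
    (B : Set (EuclideanSpace ℝ (Fin m))) : Prop :=
  UpperSemicontinuousOn u B ∧ (∀ x ∈ B, u x < ⊤) ∧ (∃ x ∈ B, u x ≠ ⊥) ∧
    ∀ z r, 0 < r → closedBall z r ⊆ B →
      ∀ h : EuclideanSpace ℝ (Fin m) → ℝ, ContinuousOn h (closedBall z r) →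
        (∀ w ∈ ball z r, HarmonicAt h w) →
        (∀ w ∈ sphere z r, u w ≤ (h w : EReal)) →
        ∀ w ∈ ball z r, u w ≤ (h w : EReal)

/-- `μ` is the Riesz measure `Δu` of the subharmonic function `u` on the open set `B`:
a locally finite positive Borel measure carried by `B` such that, distributionally,
`∫ u · Δφ = ∫ φ dμ` for all test functions `φ` supported in `B`. -/
def IsRieszMeasureOf (u : EuclideanSpace ℝ (Fin m) → EReal)
    (B : Set (EuclideanSpace ℝ (Fin m))) (μ : Measure (EuclideanSpace ℝ (Fin m))) : Prop :=
  (∀ s, μ s = μ (s ∩ B)) ∧ (∀ x ∈ B, ∃ U ∈ nhds x, μ U < ⊤) ∧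
    ∀ φ : EuclideanSpace ℝ (Fin m) → ℝ, ContDiff ℝ (⊤ : ℕ∞) φ → HasCompactSupport φ →
      tsupport φ ⊆ B →
      ∫ x in B, (u x).toReal * lap φ x = ∫ x, φ x ∂μ


local notation "𝔼" => EuclideanSpace ℝ (Fin m)

/-- Unnormalised Gaussian density. -/
def gk0 (z : 𝔼) : ℝ := Real.exp (-(1/2) * ‖z‖ ^ 2)

lemma gk0_pos (z : 𝔼) : 0 < gk0 z := Real.exp_pos _

lemma gk0_cont : Continuous (gk0 : 𝔼 → ℝ) := by unfold gk0; fun_prop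

lemma integrable_exp_sq {b : ℝ} (hb : 0 < b) :
    Integrable (fun z : 𝔼 => Real.exp (-b * ‖z‖ ^ 2)) := by
  have h := GaussianFourier.integrable_cexp_neg_mul_sq_norm_add (V := 𝔼) (b := (b : ℂ))
    (by simpa using hb) 0 0
  have h2 := h.norm
  refine h2.congr (Eventually.of_forall fun z => ?_)
  simp only [Complex.norm_exp]
  congr 1
  simp [← Complex.ofReal_pow]

lemma gk0_integrable : Integrable (gk0 : 𝔼 → ℝ) := integrable_exp_sq (by norm_num)

/-- Normalising constant. -/
def gkc (m : ℕ) : ℝ := ∫ z : EuclideanSpace ℝ (Fin m), gk0 z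

lemma gkc_pos : 0 < gkc m := by
  unfold gkc
  rw [integral_pos_iff_support_of_nonneg (fun z => (gk0_pos z).le) gk0_integrable]
  have : Function.support (gk0 : 𝔼 → ℝ) = Set.univ := by
    ext z; simp [(gk0_pos z).ne']
  rw [this]
  exact NeZero.pos _

/-- Gaussian density. -/
def gk (z : 𝔼) : ℝ := (gkc m)⁻¹ * gk0 z

lemma gk_pos (z : 𝔼) : 0 < gk z := mul_pos (inv_pos.2 gkc_pos) (gk0_pos z)

lemma gk_cont : Continuous (gk : 𝔼 → ℝ) := continuous_const.mul gk0_cont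

lemma gk_integrable : Integrable (gk : 𝔼 → ℝ) := gk0_integrable.const_mul _

/-- Gaussian measure. -/
def gm (m : ℕ) : Measure (EuclideanSpace ℝ (Fin m)) :=
  volume.withDensity (fun z => ENNReal.ofReal (gk z))

instance : IsProbabilityMeasure (gm m) := by
  constructor
  unfold gm
  rw [withDensity_apply _ MeasurableSet.univ, Measure.restrict_univ,
    ← ofReal_integral_eq_lintegral_ofReal gk_integrable
      (Eventually.of_forall fun z => (gk_pos z).le)]
  unfold gk
  rw [integral_const_mul]
  have : (∫ z : 𝔼, gk0 z) = gkc m := rfl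
  rw [this, inv_mul_cancel₀ gkc_pos.ne', ENNReal.ofReal_one]

lemma integral_gm {F : Type*} [NormedAddCommGroup F] [NormedSpace ℝ F] (f : 𝔼 → F) :
    ∫ z, f z ∂(gm m) = ∫ z, gk z • f z := by
  unfold gm
  rw [integral_withDensity_eq_integral_toReal_smul (gk_cont.measurable.ennreal_ofReal)
    (Eventually.of_forall fun z => ENNReal.ofReal_lt_top)]
  refine integral_congr_ae (Eventually.of_forall fun z => ?_)
  simp only [ENNReal.toReal_ofReal (gk_pos z).le]

lemma integrable_gm {F : Type*} [NormedAddCommGroup F] [NormedSpace ℝ F] (f : 𝔼 → F) :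
    Integrable f (gm m) ↔ Integrable (fun z => gk z • f z) := by
  unfold gm
  rw [integrable_withDensity_iff_integrable_smul' (gk_cont.measurable.ennreal_ofReal)
    (Eventually.of_forall fun z => ENNReal.ofReal_lt_top)]
  refine integrable_congr (Eventually.of_forall fun z => ?_)
  simp only [ENNReal.toReal_ofReal (gk_pos z).le]

lemma moment4 : Integrable (fun z : 𝔼 => ‖z‖ ^ 4) (gm m) := by
  rw [integrable_gm]
  have h := ((integrable_exp_sq (m := m) (b := 1/4) (by norm_num)).const_mul
    ((gkc m)⁻¹ * 32))
  refine h.mono' (gk_cont.mul (by fun_prop)).aestronglyMeasurable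
    (Eventually.of_forall fun z => ?_)
  rw [Real.norm_of_nonneg (smul_nonneg (gk_pos z).le (by positivity))]
  unfold gk gk0
  have h1 := Real.quadratic_le_exp_of_nonneg (x := 1/4 * ‖z‖^2) (by positivity)
  have h2 : Real.exp (-(1/2) * ‖z‖ ^ 2) * Real.exp (1/4 * ‖z‖^2)
      = Real.exp (-(1/4) * ‖z‖ ^ 2) := by
    rw [← Real.exp_add]; congr 1; ring
  have h3 := Real.exp_pos (-(1/2) * ‖z‖ ^ 2)
  have h4 : ‖z‖^4 ≤ 32 * Real.exp (1/4 * ‖z‖^2) := by nlinarith [sq_nonneg ‖z‖]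
  have h5 := inv_pos.2 (gkc_pos (m := m))
  calc _ = (gkc m)⁻¹ * (Real.exp (-(1/2) * ‖z‖ ^ 2) * ‖z‖^4) := by rw [smul_eq_mul]; ring
    _ ≤ (gkc m)⁻¹ * (Real.exp (-(1/2) * ‖z‖ ^ 2) * (32 * Real.exp (1/4 * ‖z‖^2))) := by gcongr
    _ = _ := by rw [← h2]; ring

lemma moment1 : Integrable (fun z : 𝔼 => ‖z‖) (gm m) := by
  refine ((integrable_const (1:ℝ)).add (moment4 (m := m))).mono'
    (by fun_prop) (Eventually.of_forall fun z => ?_)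
  simp only [norm_norm, Pi.add_apply]
  nlinarith [sq_nonneg (‖z‖ - 1), sq_nonneg (‖z‖^2 - 1), norm_nonneg z]

/-- Heat semigroup (generator half the Laplacian). -/
def Ph (t : ℝ) (g : 𝔼 → ℝ) (x : 𝔼) : ℝ := ∫ z, g (x + √t • z) ∂(gm m)

lemma bdd_integrable {g : 𝔼 → ℝ} {C : ℝ} (hg : Measurable g) (hC : ∀ x, |g x| ≤ C) (t : ℝ)
    (x : 𝔼) : Integrable (fun z => g (x + √t • z)) (gm m) := by
  refine Integrable.of_bound (C := C) ?_ (Eventually.of_forall fun z => hC _)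
  exact (hg.comp (by fun_prop)).aestronglyMeasurable

/-- Gaussian integration by parts. -/
lemma gauss_ibp {h : 𝔼 → ℝ} (hh : ContDiff ℝ 1 h) (hc : HasCompactSupport h) (x : 𝔼) (s : ℝ)
    (i : Fin m) :
    ∫ z, h (x + s • z) * z i ∂(gm m) =
      s * ∫ z, fderiv ℝ h (x + s • z) (EuclideanSpace.single i 1) ∂(gm m) := by
  set e : 𝔼 := EuclideanSpace.single i 1
  obtain ⟨C, hC⟩ := hc.exists_bound_of_continuous hh.continuous
  obtain ⟨C', hC'⟩ := (hc.fderiv_apply ℝ e).exists_bound_of_continuous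
    ((hh.continuous_fderiv one_ne_zero).clm_apply continuous_const)
  have hz : ∀ z : 𝔼, |z i| ≤ ‖z‖ := fun z => by
    simpa using PiLp.norm_apply_le z i
  have hdk : ∀ z : 𝔼, HasFDerivAt (gk : 𝔼 → ℝ) (-(gk z) • (innerSL ℝ z)) z := by
    intro z
    have h1 : HasFDerivAt (fun z : 𝔼 => ‖z‖^2) (2 • (innerSL ℝ z)) z :=
      (hasStrictFDerivAt_norm_sq z).hasFDerivAt
    have h2 := ((h1.const_mul (-(1/2):ℝ)).exp).const_mul ((gkc m)⁻¹)
    refine h2.congr_fderiv ?_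
    ext w
    simp [gk, gk0]
    ring
  have hdke : ∀ z : 𝔼, fderiv ℝ (gk : 𝔼 → ℝ) z e = -(gk z * z i) := by
    intro z
    rw [(hdk z).fderiv]
    simp [e, EuclideanSpace.inner_single_right]
  have hdf : ∀ z : 𝔼, HasFDerivAt (fun z => h (x + s • z)) (s • fderiv ℝ h (x + s • z)) z := by
    intro z
    have h1 : HasFDerivAt (fun z : 𝔼 => x + s • z) (s • ContinuousLinearMap.id ℝ 𝔼) z :=
      ((hasFDerivAt_id z).const_smul s).const_add x
    have h2 := (hh.differentiable one_ne_zero (x + s • z)).hasFDerivAt.comp z h1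
    refine h2.congr_fderiv ?_
    ext w; simp
  have hcont : Continuous fun z : 𝔼 => h (x + s • z) := hh.continuous.comp (by fun_prop)
  have hcontd : Continuous fun z : 𝔼 => fderiv ℝ h (x + s • z) e :=
    ((hh.continuous_fderiv one_ne_zero).clm_apply continuous_const).comp
      (by fun_prop : Continuous fun z : 𝔼 => x + s • z)
  have key := integral_mul_fderiv_eq_neg_fderiv_mul_of_integrable (μ := (volume : Measure 𝔼))
    (f := fun z => h (x + s • z)) (g := gk) (v := e) ?_ ?_ ?_
    (fun z _ => (hdf z).differentiableAt) (fun z _ => (hdk z).differentiableAt)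
  · simp only [hdke, (hdf _).fderiv] at key
    rw [integral_gm, integral_gm, ← integral_const_mul]
    calc _ = - ∫ z, h (x + s • z) * -(gk z * z i) := by
          rw [← integral_neg]; congr 1; ext z; simp; ring
      _ = _ := by
          rw [key, neg_neg]; congr 1; ext z; simp; ring
  · simp only [(hdf _).fderiv]
    have : Integrable (fun z : 𝔼 => s * fderiv ℝ h (x + s • z) e) (gm m) := by
      refine (Integrable.of_bound (C := C') hcontd.aestronglyMeasurable
        (Eventually.of_forall fun z => hC' _)).const_mul s
    rw [integrable_gm] at this
    refine this.congr (Eventually.of_forall fun z => ?_)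
    simp; ring
  · simp only [hdke]
    have : Integrable (fun z : 𝔼 => h (x + s • z) * (-(z i))) (gm m) := by
      refine Integrable.bdd_mul (c := C) ?_ hcont.aestronglyMeasurable
        (Eventually.of_forall fun z => hC _)
      refine Integrable.neg (moment1.mono' ?_ (Eventually.of_forall fun z => hz z))
      exact (by fun_prop : Continuous fun z : 𝔼 => z i).aestronglyMeasurable
    rw [integrable_gm] at this
    refine this.congr (Eventually.of_forall fun z => ?_)
    simp; ring
  · have : Integrable (fun z : 𝔼 => h (x + s • z)) (gm m) :=
      Integrable.of_bound (C := C) hcont.aestronglyMeasurable (Eventually.of_forall fun z => hC _)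
    rw [integrable_gm] at this
    refine this.congr (Eventually.of_forall fun z => ?_)
    simp; ring

lemma secondDeriv_eq {g : 𝔼 → ℝ} (hg : ContDiff ℝ 2 g) (x v : 𝔼) :
    secondDeriv g x v = fderiv ℝ (fderiv ℝ g) x v v := by
  unfold secondDeriv
  have h1 : DifferentiableAt ℝ (fderiv ℝ g) x :=
    (hg.fderiv_right (m := 1) (by norm_num)).differentiable one_ne_zero x
  rw [fderiv_clm_apply h1 (differentiableAt_const v)]
  simp

lemma lap_eq {g : 𝔼 → ℝ} (hg : ContDiff ℝ 2 g) (x : 𝔼) :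
    lap g x = ∑ i : Fin m, fderiv ℝ (fderiv ℝ g) x (EuclideanSpace.single i 1)
      (EuclideanSpace.single i 1) := by
  unfold lap
  exact Finset.sum_congr rfl fun i _ => secondDeriv_eq hg x _

lemma cd2 {g : 𝔼 → ℝ} (hg : ContDiff ℝ (⊤ : ℕ∞) g) : ContDiff ℝ 2 g :=
  contDiff_infty.1 hg 2

lemma cont_ff {g : 𝔼 → ℝ} (hg : ContDiff ℝ (⊤ : ℕ∞) g) : Continuous (fderiv ℝ (fderiv ℝ g)) :=
  ((cd2 hg).fderiv_right (m := 1) (by norm_num)).continuous_fderiv one_ne_zero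

lemma lap_cont {g : 𝔼 → ℝ} (hg : ContDiff ℝ (⊤ : ℕ∞) g) : Continuous (lap g) := by
  have : lap g = fun x => ∑ i : Fin m, fderiv ℝ (fderiv ℝ g) x (EuclideanSpace.single i 1)
      (EuclideanSpace.single i 1) := funext (lap_eq (cd2 hg))
  rw [this]
  have := cont_ff hg
  exact continuous_finsetSum _ fun i _ => (this.clm_apply continuous_const).clm_apply
    continuous_const

lemma lap_zero_off {g : 𝔼 → ℝ} (x : 𝔼) (hx : x ∉ tsupport g) : lap g x = 0 := by
  have h1 : g =ᶠ[𝓝 x] fun _ => 0 := notMem_tsupport_iff_eventuallyEq.1 hx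
  unfold lap secondDeriv
  refine Finset.sum_eq_zero fun i _ => ?_
  have h2 : (fun y => fderiv ℝ g y (EuclideanSpace.single i 1)) =ᶠ[𝓝 x] fun _ => 0 := by
    filter_upwards [h1.fderiv (𝕜 := ℝ)] with y hy
    rw [hy]; simp
  rw [h2.fderiv_eq]; simp

lemma lap_hcs {g : 𝔼 → ℝ} (hg : HasCompactSupport g) : HasCompactSupport (lap g) :=
  hg.of_isClosed_subset (isClosed_tsupport _) (closure_minimal (fun x hx => by
    by_contra h; exact hx (lap_zero_off x h)) (isClosed_tsupport _))

lemma Ph_continuous {g : 𝔼 → ℝ} {C : ℝ} (hg : Continuous g) (hC : ∀ x, |g x| ≤ C) :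
    Continuous (fun p : ℝ × 𝔼 => Ph p.1 g p.2) := by
  unfold Ph
  refine continuous_of_dominated (bound := fun _ => C) (fun p => ?_)
    (fun p => Eventually.of_forall fun z => hC _) (integrable_const _)
    (Eventually.of_forall fun z => ?_)
  · exact (hg.comp (by fun_prop)).aestronglyMeasurable
  · exact hg.comp (by fun_prop)

lemma Ph_zero (g : 𝔼 → ℝ) (x : 𝔼) : Ph 0 g x = g x := by
  simp [Ph]

lemma Ph_hasDerivAt {g : 𝔼 → ℝ} (hg : ContDiff ℝ (⊤ : ℕ∞) g) (hc : HasCompactSupport g)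
    (x : 𝔼) {t : ℝ} (ht : 0 < t) :
    HasDerivAt (fun t => Ph t g x) (1 / 2 * Ph t (lap g) x) t := by
  have hg2 := cd2 hg
  have hdg : Continuous (fderiv ℝ g) := hg2.continuous_fderiv (by norm_num)
  obtain ⟨C0, hC0⟩ := hc.exists_bound_of_continuous hg.continuous
  obtain ⟨C, hC⟩ := (hc.fderiv ℝ).exists_bound_of_continuous hdg
  have hCn : 0 ≤ C := (norm_nonneg _).trans (hC 0)
  have key := hasDerivAt_integral_of_dominated_loc_of_deriv_le (μ := gm m)
    (F := fun (t : ℝ) z => g (x + √t • z)) (x₀ := t) (s := Set.Ioi (t/2))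
    (F' := fun t z => fderiv ℝ g (x + √t • z) ((1 / (2 * √t)) • z))
    (bound := fun z => C * ((1 / (2 * √(t/2))) * ‖z‖))
    (Ioi_mem_nhds (by linarith)) (Eventually.of_forall fun s => ?_) ?_ ?_
    (Eventually.of_forall fun z s hs => ?_) ((moment1.const_mul _).const_mul _)
    (Eventually.of_forall fun z s hs => ?_)
  · refine key.2.congr_deriv ?_
    have h1 : ∀ y z : 𝔼, fderiv ℝ g y ((1 / (2 * √t)) • z) = (1 / (2 * √t)) *
        ∑ i, fderiv ℝ g y (EuclideanSpace.single i 1) * z i := by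
      intro y z
      rw [map_smul, smul_eq_mul]
      congr 1
      have : z = ∑ i, z i • EuclideanSpace.single i (1:ℝ) := by
        ext j; simp [Finset.sum_apply, Pi.single_apply]
      conv_lhs => rw [this]
      rw [map_sum]
      exact Finset.sum_congr rfl fun i _ => by rw [map_smul, smul_eq_mul, mul_comm]
    simp only [h1]
    rw [integral_const_mul, integral_finsetSum]
    · have h2 : ∀ i : Fin m, ContDiff ℝ 1 (fun y => fderiv ℝ g y (EuclideanSpace.single i 1)) :=
        fun i => (hg2.fderiv_right (m := 1) (by norm_num)).clm_apply contDiff_const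
      have h3 : ∀ i : Fin m, ∫ z, fderiv ℝ g (x + √t • z) (EuclideanSpace.single i 1) * z i ∂(gm m)
          = √t * ∫ z, secondDeriv g (x + √t • z) (EuclideanSpace.single i 1) ∂(gm m) := fun i =>
        gauss_ibp (h2 i) (hc.fderiv_apply ℝ _) x (√t) i
      simp only [h3]
      rw [← Finset.mul_sum, ← integral_finsetSum]
      · have : 0 < √t := Real.sqrt_pos.2 ht
        rw [← mul_assoc]
        unfold Ph lap
        congr 1
        field_simp
      · intro i _
        have hc2 : Continuous fun y => secondDeriv g y (EuclideanSpace.single i 1) := by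
          simp only [secondDeriv_eq hg2]
          exact ((cont_ff hg).clm_apply continuous_const).clm_apply continuous_const
        obtain ⟨D, hD⟩ := ((hc.fderiv_apply ℝ (EuclideanSpace.single i (1:ℝ))).fderiv_apply ℝ
          (EuclideanSpace.single i (1:ℝ))).exists_bound_of_continuous hc2
        exact Integrable.of_bound (C := D) (hc2.comp (by fun_prop)).aestronglyMeasurable
          (Eventually.of_forall fun z => hD _)
    · intro i _
      obtain ⟨D, hD⟩ := (hc.fderiv_apply ℝ (EuclideanSpace.single i (1:ℝ))).exists_bound_of_continuous
        (hdg.clm_apply continuous_const)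
      refine Integrable.bdd_mul (c := D) ?_ ?_
        (Eventually.of_forall fun z => hD _)
      · refine (moment1.mono' ?_ (Eventually.of_forall fun z => PiLp.norm_apply_le z i))
        exact (by fun_prop : Continuous fun z : 𝔼 => z i).aestronglyMeasurable
      · exact ((hdg.clm_apply continuous_const).comp
          (by fun_prop : Continuous fun z : 𝔼 => x + √t • z)).aestronglyMeasurable
  · exact (hg.continuous.comp (by fun_prop)).aestronglyMeasurable
  · exact bdd_integrable hg.continuous.measurable hC0 t x
  · exact ((hdg.comp (by fun_prop : Continuous fun z : 𝔼 => x + √t • z)).clm_apply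
      (by fun_prop)).aestronglyMeasurable
  · have hs' : t / 2 < s := hs
    refine (ContinuousLinearMap.le_opNorm _ _).trans ?_
    have h0 : 0 < √(t/2) := Real.sqrt_pos.2 (by linarith)
    have h1 : √(t/2) ≤ √s := Real.sqrt_le_sqrt hs'.le
    rw [norm_smul, Real.norm_of_nonneg (by positivity)]
    have := hC (x + √s • z)
    gcongr
  · have hs' : t / 2 < s := hs
    have h1 : HasDerivAt (fun s : ℝ => x + √s • z) ((1 / (2 * √s)) • z) s :=
      ((Real.hasDerivAt_sqrt (by linarith)).smul_const z).const_add x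
    exact (hg2.differentiable (by norm_num) (x + √s • z)).hasFDerivAt.comp_hasDerivAt s h1

lemma Ph_abs_le {g : 𝔼 → ℝ} {C : ℝ} (hC : ∀ x, |g x| ≤ C) (t : ℝ) (x : 𝔼) : |Ph t g x| ≤ C := by
  unfold Ph
  have := norm_integral_le_of_norm_le_const (μ := gm m) (f := fun z => g (x + √t • z))
    (Eventually.of_forall fun z => hC _)
  simpa using this

lemma Ph_mono {g h : 𝔼 → ℝ} {C : ℝ} (hg : Measurable g) (hgC : ∀ x, |g x| ≤ C)
    (hh : Measurable h) (hhC : ∀ x, |h x| ≤ C) (hle : ∀ x, g x ≤ h x) (t : ℝ) (x : 𝔼) :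
    Ph t g x ≤ Ph t h x :=
  integral_mono (bdd_integrable hg hgC t x) (bdd_integrable hh hhC t x) fun z => hle _

lemma Ph_sub_le {g : 𝔼 → ℝ} (hg : ContDiff ℝ (⊤ : ℕ∞) g) (hc : HasCompactSupport g) {C : ℝ}
    (hC : ∀ x, |lap g x| ≤ C) (x : 𝔼) {t : ℝ} (ht : 0 ≤ t) : |Ph t g x - g x| ≤ C * t := by
  obtain ⟨C0, hC0⟩ := hc.exists_bound_of_continuous hg.continuous
  have hCn : 0 ≤ C := (abs_nonneg _).trans (hC 0)
  have h1 : ContinuousOn (fun t => Ph t g x) (Set.Icc 0 t) :=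
    ((Ph_continuous hg.continuous hC0).comp (by fun_prop : Continuous fun t : ℝ => (t, x))).continuousOn
  have h2 := norm_image_sub_le_of_norm_deriv_right_le_segment (f := fun t => Ph t g x)
    (f' := fun s => if s = 0 then derivWithin (fun t => Ph t g x) (Set.Ici 0) 0
      else 1/2 * Ph s (lap g) x) (C := C) h1
  rcases ht.eq_or_lt with rfl | ht
  · simp [Ph_zero]
  have h3 := fun s (hs : s ∈ Set.Ioo 0 t) => Ph_hasDerivAt hg hc x hs.1
  obtain ⟨c, hc', hc2⟩ := exists_hasDerivAt_eq_slope (fun t => Ph t g x)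
    (fun s => 1/2 * Ph s (lap g) x) ht h1 h3
  simp only [Ph_zero, sub_zero] at hc2
  rw [eq_div_iff ht.ne'] at hc2
  rw [← hc2, abs_mul, abs_of_pos ht, abs_mul]
  have := Ph_abs_le hC c x
  have h5 : |(1/2:ℝ)| = 1/2 := by norm_num
  rw [h5]
  gcongr
  linarith [abs_nonneg (Ph c (lap g) x)]

lemma Ph_tendsto {g : 𝔼 → ℝ} (hg : ContDiff ℝ (⊤ : ℕ∞) g) (hc : HasCompactSupport g) (x : 𝔼) :
    Tendsto (fun t => t⁻¹ * (Ph t g x - g x)) (𝓝[>] 0) (𝓝 (1/2 * lap g x)) := by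
  obtain ⟨C0, hC0⟩ := hc.exists_bound_of_continuous hg.continuous
  obtain ⟨C1, hC1⟩ := (lap_hcs hc).exists_bound_of_continuous (lap_cont hg)
  have h1 : Continuous (fun t => Ph t g x) :=
    ((Ph_continuous hg.continuous hC0).comp (by fun_prop : Continuous fun t : ℝ => (t, x)))
  have h2 : Continuous (fun t => Ph t (lap g) x) :=
    ((Ph_continuous (lap_cont hg) hC1).comp (by fun_prop : Continuous fun t : ℝ => (t, x)))
  have key := hasDerivWithinAt_Ici_of_tendsto_deriv (f := fun t => Ph t g x) (s := Set.Ioi 0)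
    (a := 0) (e := 1/2 * lap g x)
    (fun t ht => (Ph_hasDerivAt hg hc x ht).differentiableAt.differentiableWithinAt)
    h1.continuousAt.continuousWithinAt self_mem_nhdsWithin ?_
  · have := (hasDerivWithinAt_iff_tendsto_slope.1 key)
    have h3 : Set.Ici (0:ℝ) \ {0} = Set.Ioi 0 := by ext; simp [lt_iff_le_and_ne, eq_comm]
    rw [h3] at this
    refine this.congr fun t => ?_
    simp [slope, Ph_zero]
  · have h4 : Tendsto (fun t => 1/2 * Ph t (lap g) x) (𝓝[>] 0) (𝓝 (1/2 * lap g x)) := by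
      have := (h2.tendsto 0).const_mul (1/2)
      rw [Ph_zero] at this
      exact this.mono_left nhdsWithin_le_nhds
    refine h4.congr' ?_
    filter_upwards [self_mem_nhdsWithin] with t ht
    exact (Ph_hasDerivAt hg hc x ht).deriv.symm

lemma taylor1d {f f' f'' : ℝ → ℝ} {K : ℝ} (h1 : ∀ s, HasDerivAt f (f' s) s)
    (h2 : ∀ s, HasDerivAt f' (f'' s) s) (hb : ∀ s ∈ Set.Icc (0:ℝ) 1, f'' s ≤ K) :
    f 1 ≤ f 0 + f' 0 + K / 2 := by
  have hb1 : ∀ s ∈ Set.Icc (0:ℝ) 1, f' s ≤ f' 0 + K * s := by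
    intro s hs
    have := image_le_of_deriv_right_le_deriv_boundary (a := 0) (b := 1)
      (f := f') (f' := f'')
      (fun s _ => (h2 s).continuousAt.continuousWithinAt)
      (fun s _ => (h2 s).hasDerivWithinAt) (B := fun s => f' 0 + K * s) (B' := fun _ => K)
      (by simp) (by fun_prop)
      (fun s _ => by
        have h := (((hasDerivAt_id s).const_mul K).const_add (f' 0))
        refine (h.congr_deriv ?_).hasDerivWithinAt
        simp)
      (fun s hs => hb s ⟨hs.1, hs.2.le⟩)
    exact this hs
  have := image_le_of_deriv_right_le_deriv_boundary (a := 0) (b := 1)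
      (f := f) (f' := f')
      (fun s _ => (h1 s).continuousAt.continuousWithinAt)
      (fun s _ => (h1 s).hasDerivWithinAt)
      (B := fun s => f 0 + (f' 0 * s + K/2 * s^2)) (B' := fun s => f' 0 + K * s)
      (by simp) (by fun_prop)
      (fun s _ => by
        have h := ((((hasDerivAt_id s).const_mul (f' 0)).add
          (((hasDerivAt_id s).pow 2).const_mul (K/2))).const_add (f 0))
        refine (h.congr_deriv ?_).hasDerivWithinAt
        simp; ring)
      (fun s hs => hb1 s ⟨hs.1, hs.2.le⟩)
  have h := this (Set.right_mem_Icc.2 zero_le_one)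
  simp only [mul_one, one_pow] at h
  linarith

lemma lip_ff {g : 𝔼 → ℝ} (hg : ContDiff ℝ (⊤ : ℕ∞) g) (hc : HasCompactSupport g) :
    ∃ M, LipschitzWith M (fderiv ℝ (fderiv ℝ g)) := by
  have hcd1 : ContDiff ℝ 2 (fderiv ℝ g) :=
    (contDiff_infty.1 hg 3).fderiv_right (m := 2) (by norm_num)
  have hcd : ContDiff ℝ 1 (fderiv ℝ (fderiv ℝ g)) :=
    hcd1.fderiv_right (m := 1) (by norm_num)
  exact ContDiff.lipschitzWith_of_hasCompactSupport ((hc.fderiv ℝ).fderiv ℝ) hcd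
    one_ne_zero

lemma taylor2 {g : 𝔼 → ℝ} (hg : ContDiff ℝ (⊤ : ℕ∞) g) (hc : HasCompactSupport g) :
    ∃ M : ℝ, 0 ≤ M ∧ ∀ y ξ : 𝔼, g (y + ξ) ≤ g y + fderiv ℝ g y ξ
      + 1/2 * fderiv ℝ (fderiv ℝ g) y ξ ξ + M * ‖ξ‖^3 := by
  have hcd1 : ContDiff ℝ 2 (fderiv ℝ g) :=
    (contDiff_infty.1 hg 3).fderiv_right (m := 2) (by norm_num)
  obtain ⟨M, hM⟩ := lip_ff hg hc
  refine ⟨(M : ℝ), M.coe_nonneg, fun y ξ => ?_⟩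
  have hd : ∀ s : ℝ, HasDerivAt (fun s : ℝ => y + s • ξ) ξ s := fun s => by
    simpa using ((hasDerivAt_id s).smul_const ξ).const_add y
  have hd1 : ∀ s : ℝ, HasDerivAt (fun s : ℝ => g (y + s • ξ)) (fderiv ℝ g (y + s • ξ) ξ) s :=
    fun s => ((cd2 hg).differentiable (by norm_num) _).hasFDerivAt.comp_hasDerivAt s (hd s)
  have hd2 : ∀ s : ℝ, HasDerivAt (fun s : ℝ => fderiv ℝ g (y + s • ξ) ξ)
      (fderiv ℝ (fderiv ℝ g) (y + s • ξ) ξ ξ) s := fun s => by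
    have := (hcd1.differentiable (by norm_num) _).hasFDerivAt.comp_hasDerivAt s (hd s)
    simpa using this.clm_apply (hasDerivAt_const s ξ)
  have hb : ∀ s ∈ Set.Icc (0:ℝ) 1, fderiv ℝ (fderiv ℝ g) (y + s • ξ) ξ ξ
      ≤ fderiv ℝ (fderiv ℝ g) y ξ ξ + M * ‖ξ‖^3 := by
    intro s hs
    have h1 := hM.dist_le_mul (y + s • ξ) y
    rw [dist_eq_norm, dist_eq_norm, add_sub_cancel_left, norm_smul, Real.norm_of_nonneg hs.1] at h1
    have h2 := ContinuousLinearMap.le_opNorm₂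
      (fderiv ℝ (fderiv ℝ g) (y + s • ξ) - fderiv ℝ (fderiv ℝ g) y) ξ ξ
    have h3 := le_abs_self ((fderiv ℝ (fderiv ℝ g) (y + s • ξ) - fderiv ℝ (fderiv ℝ g) y) ξ ξ)
    rw [← Real.norm_eq_abs] at h3
    have h4 : (fderiv ℝ (fderiv ℝ g) (y + s • ξ) - fderiv ℝ (fderiv ℝ g) y) ξ ξ ≤ M * ‖ξ‖^3 := by
      refine h3.trans (h2.trans ?_)
      have h5 : (M:ℝ) * (s * ‖ξ‖) ≤ M * (1 * ‖ξ‖) := by gcongr; exact hs.2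
      have h6 := h1.trans h5
      calc _ ≤ (M * (1 * ‖ξ‖)) * ‖ξ‖ * ‖ξ‖ := by gcongr
        _ = _ := by ring
    simp only [sub_apply] at h4
    linarith
  have h := taylor1d hd1 hd2 hb
  simp only [one_smul, zero_smul, add_zero] at h
  have h7 : 0 ≤ (M:ℝ) * ‖ξ‖^3 := by positivity
  linarith

/-- Quadratic form attached to a matrix. -/
def qf (a : Fin m → Fin m → ℝ) (ξ : 𝔼) : ℝ := ∑ i, ∑ j, a i j * (ξ i * ξ j)

/-- Viscosity subharmonicity of real functions. -/
def VS (f : 𝔼 → ℝ) (B : Set 𝔼) : Prop :=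
  UpperSemicontinuousOn f B ∧ ∀ x0 ∈ B, ∀ (L : 𝔼 →L[ℝ] ℝ) (a : Fin m → Fin m → ℝ),
    (∀ᶠ x in 𝓝 x0, f x ≤ f x0 + L (x - x0) + qf a (x - x0)) →
    0 ≤ ∑ i : Fin m, a i i

lemma sum_single (ξ : 𝔼) : ξ = ∑ i : Fin m, ξ i • (EuclideanSpace.single i 1 : 𝔼) := by
  ext j
  simp [Finset.sum_apply, Pi.single_apply]

lemma ff_expand (T : 𝔼 →L[ℝ] 𝔼 →L[ℝ] ℝ) (ξ : 𝔼) :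
    T ξ ξ = qf (fun i j => T (EuclideanSpace.single i 1) (EuclideanSpace.single j 1)) ξ := by
  unfold qf
  conv_lhs => rw [sum_single ξ]
  rw [map_sum T, sum_apply]
  refine Finset.sum_congr rfl fun i _ => ?_
  rw [map_sum]
  refine Finset.sum_congr rfl fun j _ => ?_
  simp only [map_smul, smul_apply, smul_eq_mul]
  ring

lemma qf_diag (c : ℝ) (ξ : 𝔼) : qf (fun i j => if i = j then c else 0) ξ = c * ‖ξ‖^2 := by
  unfold qf
  rw [EuclideanSpace.norm_sq_eq]
  simp [Finset.mul_sum, pow_two]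

lemma qf_add (a b : Fin m → Fin m → ℝ) (ξ : 𝔼) :
    qf (fun i j => a i j + b i j) ξ = qf a ξ + qf b ξ := by
  unfold qf
  simp [add_mul, Finset.sum_add_distrib]

lemma qf_smul (c : ℝ) (a : Fin m → Fin m → ℝ) (ξ : 𝔼) :
    qf (fun i j => c * a i j) ξ = c * qf a ξ := by
  unfold qf
  simp only [Finset.mul_sum]
  simp [mul_assoc]

lemma bound_ff {g : 𝔼 → ℝ} (hg : ContDiff ℝ (⊤ : ℕ∞) g) (hc : HasCompactSupport g) (v w : 𝔼) :
    ∃ C, ∀ x, |fderiv ℝ (fderiv ℝ g) x v w| ≤ C := by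
  have h := (hc.fderiv ℝ).fderiv ℝ
  have h2 := cont_ff hg
  have h3 : HasCompactSupport fun x => fderiv ℝ (fderiv ℝ g) x v w :=
    h.comp_left (g := fun T : 𝔼 →L[ℝ] 𝔼 →L[ℝ] ℝ => T v w) rfl
  exact h3.exists_bound_of_continuous ((h2.clm_apply continuous_const).clm_apply continuous_const)

lemma Ph_taylor {g : 𝔼 → ℝ} (hg : ContDiff ℝ (⊤ : ℕ∞) g) (hc : HasCompactSupport g)
    (t : ℝ) (x : 𝔼) :
    ∃ (L : 𝔼 →L[ℝ] ℝ) (a : Fin m → Fin m → ℝ) (M : ℝ), 0 ≤ M ∧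
      (∀ ξ, Ph t g (x + ξ) ≤ Ph t g x + L ξ + qf a ξ + M * ‖ξ‖^3) ∧
      ∑ i : Fin m, a i i = 1/2 * Ph t (lap g) x := by
  obtain ⟨M, hM0, hM⟩ := taylor2 hg hc
  have hdg : Continuous (fderiv ℝ g) := (cd2 hg).continuous_fderiv (by norm_num)
  obtain ⟨C0, hC0⟩ := hc.exists_bound_of_continuous hg.continuous
  obtain ⟨C1, hC1⟩ := (hc.fderiv ℝ).exists_bound_of_continuous hdg
  have hcx : Continuous fun z : 𝔼 => x + √t • z := by fun_prop
  have i1 : Integrable (fun z => fderiv ℝ g (x + √t • z)) (gm m) :=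
    Integrable.of_bound (C := C1) (hdg.comp hcx).aestronglyMeasurable
      (Eventually.of_forall fun z => hC1 _)
  have i2 : ∀ v w, Integrable (fun z => fderiv ℝ (fderiv ℝ g) (x + √t • z) v w) (gm m) := by
    intro v w
    obtain ⟨C2, hC2⟩ := bound_ff hg hc v w
    have hcc : Continuous fun z => fderiv ℝ (fderiv ℝ g) (x + √t • z) v w :=
      ((((cont_ff hg).clm_apply continuous_const).clm_apply continuous_const).comp hcx)
    exact Integrable.of_bound (C := C2) hcc.aestronglyMeasurable
      (Eventually.of_forall fun z => hC2 _)
  refine ⟨∫ z, fderiv ℝ g (x + √t • z) ∂(gm m),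
    fun i j => 1/2 * ∫ z, fderiv ℝ (fderiv ℝ g) (x + √t • z) (EuclideanSpace.single i 1)
      (EuclideanSpace.single j 1) ∂(gm m), M, hM0, fun ξ => ?_, ?_⟩
  · have e1 : (∫ z, fderiv ℝ g (x + √t • z) ∂(gm m)) ξ = ∫ z, fderiv ℝ g (x + √t • z) ξ ∂(gm m) :=
      ContinuousLinearMap.integral_apply i1 ξ
    have e2 : qf (fun i j => 1/2 * ∫ z, fderiv ℝ (fderiv ℝ g) (x + √t • z)
        (EuclideanSpace.single i 1) (EuclideanSpace.single j 1) ∂(gm m)) ξ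
        = ∫ z, 1/2 * fderiv ℝ (fderiv ℝ g) (x + √t • z) ξ ξ ∂(gm m) := by
      rw [qf_smul, integral_const_mul]
      congr 1
      simp only [ff_expand _ ξ]
      unfold qf
      rw [integral_finsetSum _ fun i _ => integrable_finsetSum _ fun j _ => (i2 _ _).mul_const _]
      refine Finset.sum_congr rfl fun i _ => ?_
      rw [integral_finsetSum _ fun j _ => (i2 _ _).mul_const _]
      refine Finset.sum_congr rfl fun j _ => ?_
      rw [integral_mul_const]
    have e3 : M * ‖ξ‖^3 = ∫ z, M * ‖ξ‖^3 ∂(gm m) := by simp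
    have j0 := bdd_integrable hg.continuous.measurable hC0 t x
    have j1 := i1.apply_continuousLinearMap ξ
    have j2 := (i2 ξ ξ).const_mul (1/2)
    have j01 := j0.add j1
    have j012 := j01.add j2
    have j3 := j012.add (integrable_const (μ := gm m) (M * ‖ξ‖^3))
    rw [e1, e2, e3]
    unfold Ph
    rw [← integral_add' j0 j1, ← integral_add' j01 j2, ← integral_add' j012 (integrable_const _)]
    refine integral_mono (bdd_integrable hg.continuous.measurable hC0 t (x + ξ)) j3 fun z => ?_
    have := hM (x + √t • z) ξ
    simp only [Pi.add_apply]
    rw [show x + ξ + √t • z = x + √t • z + ξ by abel]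
    exact this
  · unfold Ph
    simp only [lap_eq (cd2 hg)]
    rw [integral_finsetSum _ fun i _ => i2 _ _, Finset.mul_sum]

lemma deriv_nonpos_left {φ : ℝ → ℝ} {D t0 : ℝ} (h : HasDerivAt φ D t0) (h0 : 0 < t0)
    (hmin : ∀ t, 0 ≤ t → t < t0 → φ t0 ≤ φ t) : D ≤ 0 := by
  have h1 := (hasDerivWithinAt_iff_tendsto_slope' (by simp)).1 (h.hasDerivWithinAt (s := Set.Iio t0))
  refine le_of_tendsto h1 ?_
  filter_upwards [Ioo_mem_nhdsLT h0] with t ht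
  rw [slope_def_field]
  exact div_nonpos_of_nonneg_of_nonpos (sub_nonneg.2 (hmin t ht.1.le ht.2))
    (by linarith [ht.2])

lemma heat_cmp {f : 𝔼 → ℝ} {B : Set 𝔼} (hf : VS f B) {a : 𝔼} {R : ℝ} (hsub : closedBall a R ⊆ B)
    {g : 𝔼 → ℝ} (hg : ContDiff ℝ (⊤ : ℕ∞) g) (hc : HasCompactSupport g) {C T : ℝ}
    (h0 : ∀ x ∈ closedBall a R, f x ≤ g x + C)
    (h1 : ∀ x ∈ sphere a R, ∀ t, 0 < t → t ≤ T → f x ≤ Ph t g x + C) :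
    ∀ x ∈ closedBall a R, ∀ t, 0 ≤ t → t ≤ T → f x ≤ Ph t g x + C := by
  intro x1 hx1 t1 ht1 ht1T
  by_contra hcon
  push Not at hcon
  obtain ⟨C0, hC0⟩ := hc.exists_bound_of_continuous hg.continuous
  set δ := f x1 - (Ph t1 g x1 + C) with hδ
  have hδ0 : 0 < δ := by linarith
  set ε := δ / (2 * (T + 1)) with hε
  have hT : 0 ≤ T := ht1.trans ht1T
  have hε0 : 0 < ε := by positivity
  have hεT : ε * T < δ := by
    rw [hε, div_mul_eq_mul_div, div_lt_iff₀ (by positivity)]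
    nlinarith
  have hPc := Ph_continuous hg.continuous hC0
  have husc : UpperSemicontinuousOn (fun p : 𝔼 × ℝ => f p.1 + (-(Ph p.2 g p.1) - C - ε * p.2))
      (closedBall a R ×ˢ Set.Icc 0 T) := by
    have u1 : UpperSemicontinuousOn (fun p : 𝔼 × ℝ => f p.1) (closedBall a R ×ˢ Set.Icc 0 T) := by
      refine UpperSemicontinuousOn.comp (g := fun p : 𝔼 × ℝ => p.1) hf.1 (by fun_prop) ?_
      intro p hp; exact hsub hp.1
    refine u1.add (Continuous.continuousOn ?_).upperSemicontinuousOn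
    have : Continuous fun p : 𝔼 × ℝ => Ph p.2 g p.1 := hPc.comp continuous_swap
    fun_prop
  obtain ⟨⟨x0, t0⟩, hmem, hmax⟩ := UpperSemicontinuousOn.exists_isMaxOn
    (s := closedBall a R ×ˢ Set.Icc 0 T) ⟨(x1, t1), hx1, ht1, ht1T⟩ ((isCompact_closedBall a R).prod isCompact_Icc) husc
  have hmax' : ∀ x ∈ closedBall a R, ∀ t, 0 ≤ t → t ≤ T →
      f x + (-(Ph t g x) - C - ε * t) ≤ f x0 + (-(Ph t0 g x0) - C - ε * t0) :=
    fun x hx t ht htT => hmax (show (x, t) ∈ _ from ⟨hx, ht, htT⟩)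
  have hx0 : x0 ∈ closedBall a R := hmem.1
  have ht0 : 0 ≤ t0 := hmem.2.1
  have ht0T : t0 ≤ T := hmem.2.2
  have hpos : 0 < f x0 + (-(Ph t0 g x0) - C - ε * t0) := by
    have := hmax' x1 hx1 t1 ht1 ht1T
    have : ε * t1 ≤ ε * T := by gcongr
    linarith
  have ht0' : 0 < t0 := by
    rcases ht0.eq_or_lt with h | h
    · rw [← h, Ph_zero] at hpos
      have := h0 x0 hx0
      linarith
    · exact h
  have hεt0 : 0 < ε * t0 := by positivity
  have hx0b : x0 ∈ ball a R := by
    rcases (mem_closedBall.1 hx0).eq_or_lt with h | h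
    · have := h1 x0 h t0 ht0' ht0T
      linarith
    · exact h
  -- time derivative
  have hD := ((Ph_hasDerivAt hg hc x0 ht0').add ((hasDerivAt_id t0).const_mul ε))
  have hD' := deriv_nonpos_left hD ht0' (fun t ht htt => by
    have := hmax' x0 hx0 t ht (htt.le.trans ht0T)
    simp only [Pi.add_apply, id]
    linarith)
  -- space
  obtain ⟨L, A, M, hM0, hM, htr⟩ := Ph_taylor hg hc t0 x0
  set ε' := ε / (2 * (m + 1)) with hε'
  have hε'0 : 0 < ε' := by positivity
  have hV := hf.2 x0 (hsub hx0) L (fun i j => A i j + if i = j then ε' else 0) ?_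
  · simp only [Finset.sum_add_distrib] at hV
    rw [htr] at hV
    simp at hV
    have : (m:ℝ) * ε' < ε := by
      rw [hε', mul_div_assoc', div_lt_iff₀ (by positivity)]
      nlinarith
    simp at hD'
    linarith
  · have hr : 0 < ε' / (M + 1) := by positivity
    filter_upwards [isOpen_ball.mem_nhds hx0b, ball_mem_nhds x0 hr] with x hx hxr
    have h2 := hmax' x (ball_subset_closedBall hx) t0 ht0 ht0T
    have h3 := hM (x - x0)
    rw [add_sub_cancel] at h3
    rw [mem_ball, dist_eq_norm] at hxr
    have h4 : M * ‖x - x0‖^3 ≤ ε' * ‖x - x0‖^2 := by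
      rw [lt_div_iff₀ (by positivity)] at hxr
      have : M * ‖x - x0‖ ≤ ε' := by nlinarith [norm_nonneg (x - x0)]
      calc _ = (M * ‖x - x0‖) * ‖x - x0‖^2 := by ring
        _ ≤ _ := by gcongr
    rw [qf_add, qf_diag]
    linarith

lemma usc_approx {g0 : 𝔼 → ℝ} (hu : UpperSemicontinuous g0) {N ρ : ℝ} {a : 𝔼} (hρ : 0 < ρ)
    (hN : ∀ x, -N ≤ g0 x) (h0 : ∀ x, g0 x ≤ 0) (hz : ∀ x, x ∉ ball a ρ → g0 x = 0) :
    ∃ g : ℕ → 𝔼 → ℝ, (∀ n, ContDiff ℝ (⊤ : ℕ∞) (g n)) ∧ (∀ n, HasCompactSupport (g n)) ∧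
      (∀ n x, |g n x| ≤ N + 1) ∧ (∀ n x, g0 x ≤ g n x + 1 / ((n : ℝ) + 1)) ∧
      ∀ x, Tendsto (fun n => g n x) atTop (𝓝 (g0 x)) := by
  set G : ℕ → 𝔼 → ℝ := fun n x => ⨆ y, (g0 y - n * dist x y) with hG
  have hle0 : ∀ (n : ℕ) x y, g0 y - n * dist x y ≤ 0 := fun n x y => by
    have := h0 y
    have : 0 ≤ (n:ℝ) * dist x y := by positivity
    linarith
  have hbdd : ∀ (n : ℕ) x, BddAbove (Set.range fun y => g0 y - n * dist x y) := fun n x =>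
    ⟨0, by rintro _ ⟨y, rfl⟩; exact hle0 n x y⟩
  have hGge : ∀ n x, g0 x ≤ G n x := fun n x => by
    have := le_ciSup (hbdd n x) x
    simpa using this
  have hGle : ∀ n x, G n x ≤ 0 := fun n x => ciSup_le (hle0 n x)
  have hGlip : ∀ (n : ℕ) x y, G n x ≤ G n y + (n : ℝ) * dist x y := fun n x y => by
    refine ciSup_le fun w => ?_
    have h1 := le_ciSup (hbdd n y) w
    have h2 : (n:ℝ) * dist y w ≤ n * (dist x y + dist x w) := by
      gcongr; rw [dist_comm x y]; exact dist_triangle _ _ _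
    have h1' : g0 w - n * dist y w ≤ G n y := h1
    linarith
  have hGuc : ∀ n, UniformContinuous (G n) := fun n =>
    (LipschitzWith.of_le_add_mul (K := (n : NNReal)) fun x y => by
      simpa using hGlip n x y).uniformContinuous
  have hpos : ∀ n : ℕ, 0 < 1 / ((n : ℝ) + 1) := fun n => by positivity
  have hle1 : ∀ n : ℕ, 1 / ((n : ℝ) + 1) ≤ 1 := fun n => by
    rw [div_le_one (by positivity)]; linarith [(Nat.cast_nonneg n : (0:ℝ) ≤ n)]
  choose h hh1 hh2 using fun n => (hGuc n).exists_contDiff_dist_le (hpos n)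
  let χ : ContDiffBump a := ⟨ρ, ρ + 1, hρ, by linarith⟩
  have hclose : ∀ n x, |χ x * h n x - G n x| ≤ 1 / ((n : ℝ) + 1) := fun n x => by
    have h2 := (hh2 n x).le
    rw [Real.dist_eq] at h2
    by_cases hx : x ∈ ball a ρ
    · rw [χ.one_of_mem_closedBall (ball_subset_closedBall hx), one_mul]
      exact h2
    · have : G n x = 0 := le_antisymm (hGle n x) (by rw [← hz x hx]; exact hGge n x)
      rw [this, sub_zero] at h2 ⊢
      rw [abs_mul, abs_of_nonneg χ.nonneg]
      calc _ ≤ 1 * |h n x| := by gcongr; exact χ.le_one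
        _ ≤ _ := by rwa [one_mul]
  have hGtend : ∀ x, Tendsto (fun n => G n x) atTop (𝓝 (g0 x)) := fun x => by
    rw [Metric.tendsto_atTop]
    intro ε hε
    have := hu x (g0 x + ε / 2) (by linarith)
    obtain ⟨δ, hδ, hb⟩ := Metric.eventually_nhds_iff.1 this
    obtain ⟨n0, hn0⟩ := exists_nat_ge (N / δ)
    refine ⟨n0, fun n hn => ?_⟩
    have : G n x ≤ g0 x + ε / 2 := by
      refine ciSup_le fun y => ?_
      by_cases hy : dist y x < δ
      · have := hb hy
        have : 0 ≤ (n:ℝ) * dist x y := by positivity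
        linarith
      · rw [dist_comm, not_lt] at hy
        have h1 : N ≤ n * δ := by
          rw [div_le_iff₀ hδ] at hn0
          have : (n0:ℝ) ≤ n := by exact_mod_cast hn
          nlinarith
        have h2 : n * δ ≤ n * dist x y := by gcongr
        linarith [h0 y, hN x]
    rw [Real.dist_eq, abs_of_nonneg (by linarith [hGge n x])]
    linarith
  refine ⟨fun n x => χ x * h n x, fun n => χ.contDiff.mul (hh1 n),
    fun n => χ.hasCompactSupport.mul_right, fun n x => ?_, fun n x => ?_, fun x => ?_⟩
  · have := abs_le.1 (hclose n x)
    have h1 := hGge n x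
    have h2 := hGle n x
    have h3 := hle1 n
    have h4 := hN x
    simp only
    rw [abs_le]
    constructor <;> linarith
  · have := abs_le.1 (hclose n x)
    have h1 := hGge n x
    simp only
    linarith
  · have h1 : Tendsto (fun n => χ x * h n x - G n x) atTop (𝓝 0) :=
      squeeze_zero_norm (fun n => hclose n x) tendsto_one_div_add_atTop_nhds_zero_nat
    simpa using h1.add (hGtend x)

lemma indic_usc {f : 𝔼 → ℝ} {a : 𝔼} {ρ : ℝ} (hf : UpperSemicontinuousOn f (ball a ρ))
    (h0 : ∀ x ∈ ball a ρ, f x ≤ 0) : UpperSemicontinuous ((ball a ρ).indicator f) := by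
  intro x c hc
  by_cases hx : x ∈ ball a ρ
  · rw [Set.indicator_of_mem hx] at hc
    have := hf x hx c hc
    rw [isOpen_ball.nhdsWithin_eq hx] at this
    filter_upwards [this, isOpen_ball.mem_nhds hx] with y hy hy2
    rwa [Set.indicator_of_mem hy2]
  · rw [Set.indicator_of_notMem hx] at hc
    refine Eventually.of_forall fun y => lt_of_le_of_lt ?_ hc
    exact Set.indicator_nonpos h0 y

lemma heat_cmp2 {f : 𝔼 → ℝ} {B : Set 𝔼} (hf : VS f B) {a : 𝔼} {R ρ N C T : ℝ}
    (hsub : closedBall a R ⊆ B) (hρ : 0 < ρ) (hρR : ρ < R) (hC : 0 ≤ C)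
    (hN : ∀ x ∈ closedBall a R, -N ≤ f x) (h0 : ∀ x ∈ closedBall a R, f x ≤ 0)
    (h1 : ∀ x ∈ sphere a R, ∀ t, 0 < t → t ≤ T → -C ≤ Ph t ((ball a ρ).indicator f) x) :
    ∀ x ∈ closedBall a R, ∀ t, 0 ≤ t → t ≤ T → f x ≤ Ph t ((ball a ρ).indicator f) x + C := by
  set g0 := (ball a ρ).indicator f with hg0
  have hbs : ball a ρ ⊆ closedBall a R := ball_subset_closedBall.trans (closedBall_subset_closedBall hρR.le)
  have hN0 : 0 ≤ N := by
    have ha : a ∈ closedBall a R := mem_closedBall_self (by linarith)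
    linarith [hN a ha, h0 a ha]
  have hu : UpperSemicontinuous g0 := indic_usc (hf.1.mono (hbs.trans hsub)) fun x hx => h0 x (hbs hx)
  have hg00 : ∀ x, g0 x ≤ 0 := fun x => Set.indicator_nonpos (fun x hx => h0 x (hbs hx)) x
  have hg0N : ∀ x, -N ≤ g0 x := fun x => by
    by_cases hx : x ∈ ball a ρ
    · rw [hg0, Set.indicator_of_mem hx]; exact hN x (hbs hx)
    · rw [hg0, Set.indicator_of_notMem hx]; linarith
  obtain ⟨g, hgs, hgc, hgb, hgge, hgt⟩ := usc_approx hu hρ hg0N hg00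
    (fun x hx => Set.indicator_of_notMem hx _)
  have hg0b : ∀ x, |g0 x| ≤ N + 1 := fun x => abs_le.2 ⟨by linarith [hg0N x], by linarith [hg00 x]⟩
  intro x hx t ht htT
  have key : ∀ n : ℕ, f x ≤ Ph t (g n) x + (C + 1 / ((n:ℝ) + 1)) := fun n => by
    have hpos : 0 < 1 / ((n : ℝ) + 1) := by positivity
    refine heat_cmp hf hsub (hgs n) (hgc n) (T := T) (fun y hy => ?_) (fun y hy s hs hsT => ?_) x hx t ht htT
    · have h2 : f y ≤ g0 y := by
        by_cases hyb : y ∈ ball a ρ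
        · rw [hg0, Set.indicator_of_mem hyb]
        · rw [hg0, Set.indicator_of_notMem hyb]; exact h0 y hy
      linarith [hgge n y]
    · have h2 := h1 y hy s hs hsT
      have h3 := h0 y (sphere_subset_closedBall hy)
      have h4 : Ph s g0 y ≤ Ph s (g n) y + 1 / ((n:ℝ)+1) := by
        have e : Ph s (g n) y + 1 / ((n:ℝ)+1) = ∫ z, (g n (y + √s • z) + 1 / ((n:ℝ)+1)) ∂(gm m) := by
          rw [integral_add (bdd_integrable (hgs n).continuous.measurable (hgb n) s y)
            (integrable_const _)]
          simp [Ph]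
        rw [e]
        exact integral_mono (bdd_integrable hu.measurable hg0b s y)
          ((bdd_integrable (hgs n).continuous.measurable (hgb n) s y).add (integrable_const _))
          fun z => hgge n _
      linarith
  have hlim : Tendsto (fun n : ℕ => Ph t (g n) x + (C + 1 / ((n:ℝ) + 1))) atTop
      (𝓝 (Ph t g0 x + (C + 0))) := by
    refine Tendsto.add ?_ (tendsto_const_nhds.add tendsto_one_div_add_atTop_nhds_zero_nat)
    refine tendsto_integral_of_dominated_convergence (fun _ => N + 1)
      (fun n => (bdd_integrable (hgs n).continuous.measurable (hgb n) t x).aestronglyMeasurable)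
      (integrable_const _) (fun n => Eventually.of_forall fun z => hgb n _)
      (Eventually.of_forall fun z => hgt _)
  rw [add_zero] at hlim
  exact ge_of_tendsto' hlim key

lemma gm_neg {F : 𝔼 → ℝ} : ∫ z, F (-z) ∂(gm m) = ∫ z, F z ∂(gm m) := by
  rw [integral_gm, integral_gm, ← integral_neg_eq_self]
  refine integral_congr_ae (Eventually.of_forall fun z => ?_)
  simp [gk, gk0]

lemma Ph_symm {φ g0 : 𝔼 → ℝ} {C0 C1 : ℝ} (hφ : Measurable φ) (hφi : Integrable φ)
    (hφb : ∀ x, |φ x| ≤ C0) (hg : Measurable g0) (hgi : Integrable g0) (hgb : ∀ x, |g0 x| ≤ C1)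
    (t : ℝ) : ∫ x, φ x * Ph t g0 x = ∫ x, g0 x * Ph t φ x := by
  have hC0 : 0 ≤ C0 := (abs_nonneg _).trans (hφb 0)
  have I1 : Integrable (fun p : 𝔼 × 𝔼 => φ p.1 * g0 (p.1 + √t • p.2)) (volume.prod (gm m)) := by
    have h1 : Integrable (fun p : 𝔼 × 𝔼 => φ p.1) (volume.prod (gm m)) := hφi.comp_fst (gm m)
    refine h1.mul_bdd (c := C1) ?_ (Eventually.of_forall fun p => hgb _)
    exact (hg.comp (by fun_prop)).aestronglyMeasurable
  have I2 : Integrable (fun p : 𝔼 × 𝔼 => g0 p.1 * φ (p.1 - √t • p.2)) (volume.prod (gm m)) := by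
    have h1 : Integrable (fun p : 𝔼 × 𝔼 => g0 p.1) (volume.prod (gm m)) := hgi.comp_fst (gm m)
    refine h1.mul_bdd (c := C0) ?_ (Eventually.of_forall fun p => hφb _)
    exact (hφ.comp (by fun_prop)).aestronglyMeasurable
  calc ∫ x, φ x * Ph t g0 x = ∫ x, ∫ z, φ x * g0 (x + √t • z) ∂(gm m) := by
        simp only [Ph, integral_const_mul]
    _ = ∫ z, (∫ x, φ x * g0 (x + √t • z)) ∂(gm m) := integral_integral_swap I1
    _ = ∫ z, (∫ x, g0 x * φ (x - √t • z)) ∂(gm m) := by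
        refine integral_congr_ae (Eventually.of_forall fun z => ?_)
        simp only
        rw [← integral_add_right_eq_self (fun x => g0 x * φ (x - √t • z)) (√t • z)]
        simp only [add_sub_cancel_right, mul_comm]
    _ = ∫ x, ∫ z, g0 x * φ (x - √t • z) ∂(gm m) := (integral_integral_swap I2).symm
    _ = ∫ x, g0 x * Ph t φ x := by
        refine integral_congr_ae (Eventually.of_forall fun x => ?_)
        simp only [integral_const_mul]
        congr 1
        unfold Ph
        rw [← gm_neg]
        simp [sub_eq_add_neg]

lemma integral_lap {φ : 𝔼 → ℝ} (hφ : ContDiff ℝ (⊤ : ℕ∞) φ) (hc : HasCompactSupport φ) :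
    ∫ x, lap φ x = 0 := by
  unfold lap secondDeriv
  have hh : ∀ v : 𝔼, ContDiff ℝ 1 (fun y => fderiv ℝ φ y v) := fun v =>
    ((cd2 hφ).fderiv_right (m := 1) (by norm_num)).clm_apply contDiff_const
  have hcs : ∀ v : 𝔼, HasCompactSupport (fun y => fderiv ℝ φ y v) := fun v => hc.fderiv_apply ℝ v
  have hi : ∀ v : 𝔼, Integrable (fun x => fderiv ℝ (fun y => fderiv ℝ φ y v) x v) := fun v =>
    Continuous.integrable_of_hasCompactSupport
      (((hh v).continuous_fderiv one_ne_zero).clm_apply continuous_const)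
      ((hcs v).fderiv_apply ℝ v)
  rw [integral_finsetSum _ fun i _ => hi _]
  refine Finset.sum_eq_zero fun i _ => ?_
  set v : 𝔼 := EuclideanSpace.single i 1
  have := integral_mul_fderiv_eq_neg_fderiv_mul_of_integrable (μ := volume) (𝕜 := ℝ) (v := v)
    (f := fun _ : 𝔼 => (1:ℝ)) (g := fun y => fderiv ℝ φ y v) (by simp) (by simpa using hi v)
    (by simpa using (hh v).continuous.integrable_of_hasCompactSupport (hcs v))
    (fun x _ => by fun_prop) (fun x _ => ((hh v).differentiable one_ne_zero x))
  simpa using this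

lemma VS.sub_const {f : 𝔼 → ℝ} {B : Set 𝔼} (hf : VS f B) (c : ℝ) : VS (fun x => f x - c) B := by
  refine ⟨?_, fun x0 hx0 L a h => hf.2 x0 hx0 L a ?_⟩
  · simp only [sub_eq_add_neg]
    exact hf.1.add (continuousOn_const).upperSemicontinuousOn
  · filter_upwards [h] with x hx
    linarith

lemma usc_bdd {f : 𝔼 → ℝ} {K : Set 𝔼} (hK : IsCompact K) (hf : UpperSemicontinuousOn f K) :
    ∃ M, ∀ x ∈ K, f x ≤ M := by
  rcases K.eq_empty_or_nonempty with rfl | hne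
  · exact ⟨0, by simp⟩
  · obtain ⟨x, hx, hmax⟩ := UpperSemicontinuousOn.exists_isMaxOn hne hK hf
    exact ⟨f x, fun y hy => hmax hy⟩

lemma VS_pair {f : 𝔼 → ℝ} (hf : VS f (ball 0 1)) {N : ℝ} (hN : ∀ x ∈ ball (0:𝔼) 1, -N ≤ f x)
    {φ : 𝔼 → ℝ} (hφ : ContDiff ℝ (⊤ : ℕ∞) φ) (hc : HasCompactSupport φ)
    (hs : tsupport φ ⊆ ball 0 1) (h0 : ∀ x, 0 ≤ φ x) : 0 ≤ ∫ x, f x * lap φ x := by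
  obtain ⟨R1, hR1, hR1s⟩ := exists_pos_lt_subset_ball one_pos (isClosed_tsupport φ) hs
  obtain ⟨R3, hR13, hR3⟩ := exists_between hR1.2
  obtain ⟨R2, hR12, hR23⟩ := exists_between hR13
  have hR1p := hR1.1
  have hsub : closedBall (0:𝔼) R3 ⊆ ball 0 1 := closedBall_subset_ball hR3
  obtain ⟨M, hM⟩ := usc_bdd (isCompact_closedBall (0:𝔼) R3) (hf.1.mono hsub)
  have hfM := hf.sub_const M
  set fM := fun x => f x - M with hfMdef
  have hb0 : ∀ x ∈ closedBall (0:𝔼) R3, fM x ≤ 0 := fun x hx => by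
    have := hM x hx; simp only [hfMdef]; linarith
  have hbN : ∀ x ∈ closedBall (0:𝔼) R3, -(N + M) ≤ fM x := fun x hx => by
    have := hN x (hsub hx); simp only [hfMdef]; linarith
  have hN0 : 0 ≤ N + M := by
    have ha : (0:𝔼) ∈ closedBall (0:𝔼) R3 := mem_closedBall_self (by linarith)
    linarith [hbN 0 ha, hb0 0 ha]
  set g0 := (ball (0:𝔼) R2).indicator fM with hg0
  have hbs : ball (0:𝔼) R2 ⊆ closedBall 0 R3 :=
    ball_subset_closedBall.trans (closedBall_subset_closedBall hR23.le)
  have hu : UpperSemicontinuous g0 := indic_usc (hfM.1.mono (hbs.trans hsub)) fun x hx => hb0 x (hbs hx)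
  have hg0b : ∀ x, |g0 x| ≤ N + M := fun x => by
    by_cases hx : x ∈ ball (0:𝔼) R2
    · rw [hg0, Set.indicator_of_mem hx, abs_le]
      exact ⟨hbN x (hbs hx), (hb0 x (hbs hx)).trans hN0⟩
    · rw [hg0, Set.indicator_of_notMem hx]; simpa using hN0
  have hg0i : Integrable g0 := by
    have : IntegrableOn g0 (ball (0:𝔼) R2) :=
      Measure.integrableOn_of_bounded (M := N + M) measure_ball_lt_top.ne
        hu.measurable.aestronglyMeasurable (Eventually.of_forall fun x => hg0b x)
    refine this.integrable_of_forall_notMem_eq_zero fun x hx => ?_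
    rw [hg0, Set.indicator_of_notMem hx]
  obtain ⟨C0, hC0⟩ := hc.exists_bound_of_continuous hφ.continuous
  obtain ⟨C1, hC1⟩ := (lap_hcs hc).exists_bound_of_continuous (lap_cont hφ)
  have hφi : Integrable φ := hφ.continuous.integrable_of_hasCompactSupport hc
  set K := (N + M) * (∫ z : 𝔼, ‖z‖^4 ∂(gm m)) / (R3 - R2)^4 with hK
  have hmom : 0 ≤ ∫ z : 𝔼, ‖z‖^4 ∂(gm m) := integral_nonneg fun z => by positivity
  have hd : 0 < R3 - R2 := by linarith
  have hK0 : 0 ≤ K := by positivity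
  have hcmp : ∀ t : ℝ, 0 < t → ∀ x ∈ closedBall (0:𝔼) R3, fM x ≤ Ph t g0 x + K * t^2 := by
    intro t ht x hx
    refine heat_cmp2 hfM hsub (by linarith) hR23 (by positivity) hbN hb0 ?_ x hx t ht.le le_rfl
    intro y hy s hs hst
    have hi4 : Integrable (fun z : 𝔼 => -((N + M) * s^2 / (R3 - R2)^4) * ‖z‖^4) (gm m) :=
      moment4.const_mul _
    have e : ∫ z : 𝔼, -((N + M) * s^2 / (R3 - R2)^4) * ‖z‖^4 ∂(gm m) = -(K * s^2) := by
      rw [integral_const_mul, hK]; ring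
    have h2 : K * s^2 ≤ K * t^2 := by gcongr
    have h3 : -(K * s^2) ≤ Ph s g0 y := by
      rw [← e]
      refine integral_mono hi4 (bdd_integrable hu.measurable hg0b s y) fun z => ?_
      simp only
      by_cases hz : y + √s • z ∈ ball (0:𝔼) R2
      · refine le_trans ?_ (abs_le.1 (hg0b _)).1
        have h4 : R3 - R2 ≤ √s * ‖z‖ := by
          have h5 : ‖√s • z‖ = √s * ‖z‖ := by rw [norm_smul, Real.norm_of_nonneg (Real.sqrt_nonneg _)]
          rw [← h5]
          rw [mem_ball_zero_iff] at hz
          rw [mem_sphere_zero_iff_norm] at hy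
          have := norm_sub_norm_le y (y + √s • z)
          have h6 : ‖y - (y + √s • z)‖ = ‖√s • z‖ := by rw [sub_add_cancel_left, norm_neg]
          linarith
        have h7 : (R3 - R2)^4 ≤ s^2 * ‖z‖^4 := by
          calc _ ≤ (√s * ‖z‖)^4 := by gcongr
            _ = (√s^2)^2 * ‖z‖^4 := by ring
            _ = _ := by rw [Real.sq_sqrt hs.le]
        have h8 : 1 ≤ s^2 * ‖z‖^4 / (R3 - R2)^4 := by rwa [one_le_div (by positivity)]
        have h9 : (N + M) * s^2 / (R3 - R2)^4 * ‖z‖^4 = (N + M) * (s^2 * ‖z‖^4 / (R3 - R2)^4) := by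
          ring
        nlinarith
      · rw [hg0, Set.indicator_of_notMem hz]
        have : 0 ≤ (N + M) * s^2 / (R3 - R2)^4 * ‖z‖^4 := by positivity
        linarith
    linarith
  have hφz : ∀ x, x ∉ ball (0:𝔼) R2 → φ x = 0 := fun x hx => by
    refine image_eq_zero_of_notMem_tsupport fun h => hx ?_
    exact ball_subset_ball hR12.le (hR1s h)
  have hPm : ∀ t, Measurable (fun x => Ph t g0 x) := fun t => by
    unfold Ph
    have : StronglyMeasurable (fun p : 𝔼 × 𝔼 => g0 (p.1 + √t • p.2)) :=
      (hu.measurable.comp (by fun_prop)).stronglyMeasurable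
    exact this.integral_prod_right'.measurable
  have hPi : ∀ t, Integrable (fun x => φ x * Ph t g0 x) := fun t =>
    hφi.mul_bdd (c := N + M) (hPm t).aestronglyMeasurable
      (Eventually.of_forall fun x => Ph_abs_le hg0b t x)
  have hφg : Integrable (fun x => φ x * g0 x) :=
    hφi.mul_bdd (c := N + M) hu.measurable.aestronglyMeasurable (Eventually.of_forall hg0b)
  have hPφc : ∀ t, Continuous (fun x => Ph t φ x) := fun t =>
    (Ph_continuous hφ.continuous hC0).comp (by fun_prop : Continuous fun x : 𝔼 => (t, x))
  have hstep : ∀ t : ℝ, 0 < t → 0 ≤ (∫ x, g0 x * (t⁻¹ * (Ph t φ x - φ x))) + K * (∫ x, φ x) * t := by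
    intro t ht
    have h1 : ∫ x, φ x * g0 x ≤ ∫ x, (φ x * Ph t g0 x + φ x * (K * t^2)) := by
      refine integral_mono hφg ((hPi t).add (hφi.mul_const _)) fun x => ?_
      simp only
      by_cases hx : x ∈ ball (0:𝔼) R2
      · rw [← mul_add]
        refine mul_le_mul_of_nonneg_left ?_ (h0 x)
        have := hcmp t ht x (hbs hx)
        rwa [show g0 x = fM x from Set.indicator_of_mem hx _]
      · simp [hφz x hx]
    rw [integral_add (hPi t) (hφi.mul_const _), integral_mul_const,
      Ph_symm hφ.continuous.measurable hφi hC0 hu.measurable hg0i hg0b t] at h1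
    have hi1 : Integrable (fun x => g0 x * Ph t φ x) :=
      hg0i.mul_bdd (c := C0) (hPφc t).aestronglyMeasurable
        (Eventually.of_forall fun x => Ph_abs_le hC0 t x)
    have hi2 : Integrable (fun x => g0 x * φ x) := by simpa only [mul_comm] using hφg
    have e : ∫ x, g0 x * (t⁻¹ * (Ph t φ x - φ x)) =
        t⁻¹ * ((∫ x, g0 x * Ph t φ x) - ∫ x, g0 x * φ x) := by
      rw [← integral_sub hi1 hi2, ← integral_const_mul]
      refine integral_congr_ae (Eventually.of_forall fun x => ?_)
      simp only; ring
    rw [e]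
    have e2 : K * (∫ x, φ x) * t = t⁻¹ * ((∫ x, φ x) * (K * t^2)) := by field_simp
    have e3 : ∫ x, g0 x * φ x = ∫ x, φ x * g0 x := by simp only [mul_comm]
    rw [e2, ← mul_add]
    refine mul_nonneg (inv_nonneg.2 ht.le) ?_
    linarith
  have hlim : Tendsto (fun t : ℝ => (∫ x, g0 x * (t⁻¹ * (Ph t φ x - φ x))) + K * (∫ x, φ x) * t)
      (𝓝[>] 0) (𝓝 ((∫ x, g0 x * (1/2 * lap φ x)) + K * (∫ x, φ x) * 0)) := by
    refine Tendsto.add ?_ ((tendsto_id.mono_left nhdsWithin_le_nhds).const_mul _)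
    refine tendsto_integral_filter_of_dominated_convergence (fun x => ‖g0 x‖ * C1) ?_ ?_
      (hg0i.norm.mul_const _) ?_
    · refine Eventually.of_forall fun t => ?_
      exact hg0i.aestronglyMeasurable.mul
        (continuous_const.mul ((hPφc t).sub hφ.continuous)).aestronglyMeasurable
    · filter_upwards [self_mem_nhdsWithin] with t ht
      refine Eventually.of_forall fun x => ?_
      rw [norm_mul]
      gcongr
      have := Ph_sub_le hφ hc hC1 x (le_of_lt ht)
      have ht' : (0:ℝ) < t := ht
      rw [norm_mul, Real.norm_of_nonneg (inv_nonneg.2 ht'.le), inv_mul_le_iff₀ ht', mul_comm t]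
      exact this
    · refine Eventually.of_forall fun x => ?_
      exact (Ph_tendsto hφ hc x).const_mul _
  have hfin := ge_of_tendsto hlim (by
    filter_upwards [self_mem_nhdsWithin] with t ht using hstep t ht)
  rw [mul_zero, add_zero] at hfin
  have hlapi : Integrable (lap φ) := (lap_cont hφ).integrable_of_hasCompactSupport (lap_hcs hc)
  have hgl : Integrable (fun x => g0 x * lap φ x) :=
    hg0i.mul_bdd (c := C1) (lap_cont hφ).aestronglyMeasurable (Eventually.of_forall hC1)
  have e4 : ∫ x, g0 x * (1/2 * lap φ x) = 1/2 * ∫ x, g0 x * lap φ x := by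
    rw [← integral_const_mul]
    refine integral_congr_ae (Eventually.of_forall fun x => ?_)
    simp only; ring
  have e5 : ∫ x, f x * lap φ x = ∫ x, (g0 x * lap φ x + M * lap φ x) := by
    refine integral_congr_ae (Eventually.of_forall fun x => ?_)
    simp only
    by_cases hx : x ∈ ball (0:𝔼) R2
    · rw [show g0 x = fM x from Set.indicator_of_mem hx _]
      simp only [hfMdef]; ring
    · rw [lap_zero_off x fun h => hx (ball_subset_ball hR12.le (hR1s h))]; simp
  rw [e5, integral_add hgl (hlapi.const_mul _), integral_const_mul, integral_lap hφ hc]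
  rw [e4] at hfin
  linarith

lemma Ph_kernel {g : 𝔼 → ℝ} {s : ℝ} (hs : 0 < s) (x : 𝔼) :
    Ph s g x = ∫ y, (√s ^ m)⁻¹ * gk ((√s)⁻¹ • (y - x)) * g y := by
  have hσ : 0 < √s := Real.sqrt_pos.2 hs
  unfold Ph
  rw [integral_gm]
  have h1 := Measure.integral_comp_smul (volume : Measure 𝔼)
    (fun w => gk ((√s)⁻¹ • w) * g (x + w)) (√s)
  simp only [inv_smul_smul₀ hσ.ne', finrank_euclideanSpace, Fintype.card_fin] at h1
  simp only [smul_eq_mul]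
  rw [h1, abs_of_nonneg (by positivity), smul_eq_mul, ← integral_const_mul,
    ← integral_sub_right_eq_self _ x]
  refine integral_congr_ae (Eventually.of_forall fun y => ?_)
  simp only [add_sub_cancel]
  ring

/-- heat kernel profile -/
def hk (m : ℕ) (σ d : ℝ) : ℝ := (σ ^ m)⁻¹ * ((gkc m)⁻¹ * Real.exp (-(1/2) * (σ⁻¹ * d) ^ 2))

lemma hk_pos {σ : ℝ} (hσ : 0 < σ) (d : ℝ) : 0 < hk m σ d := by
  have := gkc_pos (m := m)
  unfold hk; positivity

lemma hk_eq {σ : ℝ} (hσ : 0 < σ) (w : 𝔼) : (σ ^ m)⁻¹ * gk (σ⁻¹ • w) = hk m σ ‖w‖ := by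
  unfold hk gk gk0
  rw [norm_smul, Real.norm_of_nonneg (inv_nonneg.2 hσ.le)]

lemma hk_anti {σ d d' : ℝ} (hσ : 0 < σ) (hd : 0 ≤ d) (h : d ≤ d') : hk m σ d' ≤ hk m σ d := by
  have := gkc_pos (m := m)
  unfold hk
  gcongr (σ ^ m)⁻¹ * ((gkc m)⁻¹ * Real.exp ?_)
  have : (σ⁻¹ * d)^2 ≤ (σ⁻¹ * d')^2 := by gcongr
  linarith

lemma hk_ratio {ρ σ τ : ℝ} (hρ : 0 < ρ) (hσ : 0 < σ) (hτ : 0 < τ) (hst : σ ≤ τ)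
    (hτρ : τ ^ 2 * (2 * (m + 1)) = ρ ^ 2) : hk m σ (3 * ρ) ≤ 1/2 * hk m τ ρ := by
  have hg := gkc_pos (m := m)
  set r := τ / σ with hr
  have hr1 : 1 ≤ r := by rwa [hr, one_le_div hσ]
  have hσr : σ = τ / r := by rw [hr]; field_simp
  have hr0 : 0 < r := by linarith
  have e1 : -(1/2) * (σ⁻¹ * (3 * ρ))^2 = -9 * (m + 1) * r^2 := by
    rw [hσr]; rw [mul_pow, mul_pow, ← hτρ]; field_simp; ring
  have e2 : -(1/2) * (τ⁻¹ * ρ)^2 = -((m:ℝ) + 1) := by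
    rw [mul_pow, ← hτρ]; field_simp
  unfold hk
  rw [e1, e2]
  have e3 : (σ^m)⁻¹ = (τ^m)⁻¹ * r^m := by rw [hσr, div_pow]; field_simp
  have h1 : r^m ≤ Real.exp (m * (r - 1)) := by
    rw [Real.exp_nat_mul]
    gcongr
    have := Real.add_one_le_exp (r - 1)
    linarith
  have h2 : r^m * Real.exp (-9 * (m + 1) * r^2) ≤ 1/2 * Real.exp (-((m:ℝ) + 1)) := by
    have h3 : Real.exp (-1) ≤ 1/2 := by
      rw [Real.exp_neg, inv_le_comm₀ (Real.exp_pos _) (by norm_num)]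
      have := Real.add_one_le_exp (1:ℝ)
      norm_num; linarith
    calc r^m * Real.exp (-9 * (m + 1) * r^2)
        ≤ Real.exp (m * (r - 1)) * Real.exp (-9 * (m + 1) * r^2) := by gcongr
      _ = Real.exp (m * (r - 1) + -9 * (m + 1) * r^2) := (Real.exp_add _ _).symm
      _ ≤ Real.exp (-1 + -((m:ℝ) + 1)) := by
          apply Real.exp_le_exp.2
          have hm : (0:ℝ) ≤ m := Nat.cast_nonneg m
          have h5 : r ≤ r^2 := by nlinarith
          have h6 : (m:ℝ) * r ≤ m * r^2 := by gcongr
          have h7 : (m:ℝ) * 1 ≤ m * r^2 := by gcongr; nlinarith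
          nlinarith
      _ = Real.exp (-1) * Real.exp (-((m:ℝ) + 1)) := Real.exp_add _ _
      _ ≤ _ := by gcongr
  rw [e3]
  calc (τ^m)⁻¹ * r^m * ((gkc m)⁻¹ * Real.exp (-9 * (m + 1) * r^2))
      = (τ^m)⁻¹ * (gkc m)⁻¹ * (r^m * Real.exp (-9 * (m + 1) * r^2)) := by ring
    _ ≤ (τ^m)⁻¹ * (gkc m)⁻¹ * (1/2 * Real.exp (-((m:ℝ) + 1))) := by gcongr
    _ = _ := by ring

lemma VS_L1 {ρ : ℝ} (hρ : 0 < ρ) : ∃ K : ℝ, 0 ≤ K ∧ ∀ (f : 𝔼 → ℝ) (B : Set 𝔼), VS f B →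
    ∀ (x0 : 𝔼) (N : ℝ), closedBall x0 (4 * ρ) ⊆ B → (∀ x ∈ closedBall x0 (4 * ρ), -N ≤ f x) →
    (∀ x ∈ closedBall x0 (4 * ρ), f x ≤ 0) →
    IntegrableOn f (ball x0 ρ) ∧ ∫ x in ball x0 ρ, -f x ≤ K * (-f x0) := by
  set T := ρ^2 / (2 * (m + 1)) with hT
  have hT0 : 0 < T := by positivity
  have hτ : 0 < √T := Real.sqrt_pos.2 hT0
  have hτρ : √T ^ 2 * (2 * (m + 1)) = ρ ^ 2 := by
    rw [Real.sq_sqrt hT0.le, hT]; field_simp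
  have hh := hk_pos (m := m) hτ ρ
  refine ⟨2 / hk m (√T) ρ, by positivity, fun f B hf x0 N hsub hN h0 => ?_⟩
  have hbs : ball x0 ρ ⊆ closedBall x0 (4 * ρ) :=
    ball_subset_closedBall.trans (closedBall_subset_closedBall (by linarith))
  set g0 := (ball x0 ρ).indicator f with hg0
  have hu : UpperSemicontinuous g0 := indic_usc (hf.1.mono (hbs.trans hsub)) fun x hx => h0 x (hbs hx)
  have hg00 : ∀ x, g0 x ≤ 0 := fun x => Set.indicator_nonpos (fun x hx => h0 x (hbs hx)) x
  have hx0 : x0 ∈ closedBall x0 (4 * ρ) := mem_closedBall_self (by linarith)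
  have hN0 : 0 ≤ N := by linarith [hN x0 hx0, h0 x0 hx0]
  have hg0b : ∀ x, |g0 x| ≤ N := fun x => by
    by_cases hx : x ∈ ball x0 ρ
    · rw [hg0, Set.indicator_of_mem hx, abs_le]
      exact ⟨hN x (hbs hx), (h0 x (hbs hx)).trans hN0⟩
    · rw [hg0, Set.indicator_of_notMem hx]; simpa using hN0
  have hg0i : Integrable g0 := by
    have : IntegrableOn g0 (ball x0 ρ) :=
      Measure.integrableOn_of_bounded (M := N) measure_ball_lt_top.ne
        hu.measurable.aestronglyMeasurable (Eventually.of_forall fun x => hg0b x)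
    refine this.integrable_of_forall_notMem_eq_zero fun x hx => ?_
    rw [hg0, Set.indicator_of_notMem hx]
  set I := ∫ y, g0 y with hI
  have hI0 : I ≤ 0 := integral_nonpos hg00
  have hki : ∀ s : ℝ, 0 < s → ∀ x : 𝔼,
      Integrable (fun y => (√s ^ m)⁻¹ * gk ((√s)⁻¹ • (y - x)) * g0 y) := fun s hs x => by
    have hσ : 0 < √s := Real.sqrt_pos.2 hs
    refine hg0i.bdd_mul (c := hk m (√s) 0) ?_ (Eventually.of_forall fun y => ?_)
    · exact (continuous_const.mul (gk_cont.comp (by fun_prop))).aestronglyMeasurable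
    · rw [hk_eq hσ, Real.norm_of_nonneg (hk_pos hσ _).le]
      exact hk_anti hσ le_rfl (norm_nonneg _)
  have hup : Ph T g0 x0 ≤ hk m (√T) ρ * I := by
    rw [Ph_kernel hT0, hI, ← integral_const_mul]
    refine integral_mono (hki T hT0 x0) (hg0i.const_mul _) fun y => ?_
    simp only
    rw [hk_eq hτ]
    by_cases hy : y ∈ ball x0 ρ
    · refine mul_le_mul_of_nonpos_right ?_ (hg00 y)
      rw [mem_ball, dist_eq_norm] at hy
      exact hk_anti hτ (norm_nonneg _) hy.le
    · rw [show g0 y = 0 from Set.indicator_of_notMem hy _]; simp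
  have hcmp := heat_cmp2 hf (T := T) hsub hρ (by linarith) (C := -(1/2 * hk m (√T) ρ * I))
    (by nlinarith) hN h0 (fun x hx s hs hsT => ?_) x0 hx0 T hT0.le le_rfl
  · have h3 : -f x0 ≥ 1/2 * hk m (√T) ρ * (-I) := by
      rw [← hg0] at hcmp
      linarith
    refine ⟨?_, ?_⟩
    · rw [← integrable_indicator_iff measurableSet_ball]; exact hg0i
    · have e : ∫ x in ball x0 ρ, -f x = -I := by
        rw [integral_neg, hI, hg0, integral_indicator measurableSet_ball]
      rw [e, div_mul_eq_mul_div, le_div_iff₀ hh]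
      linarith
  · have hσ : 0 < √s := Real.sqrt_pos.2 hs
    rw [neg_neg, ← hg0]
    have h1 := hk_ratio (m := m) hρ hσ hτ (Real.sqrt_le_sqrt hsT) hτρ
    have h2 : 1/2 * hk m (√T) ρ * I ≤ hk m (√s) (3 * ρ) * I := mul_le_mul_of_nonpos_right h1 hI0
    refine h2.trans ?_
    rw [Ph_kernel hs, hI, ← integral_const_mul]
    refine integral_mono (hg0i.const_mul _) (hki s hs x) fun y => ?_
    simp only
    rw [hk_eq hσ]
    by_cases hy : y ∈ ball x0 ρ
    · refine mul_le_mul_of_nonpos_right ?_ (hg00 y)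
      rw [mem_ball] at hy
      rw [mem_sphere] at hx
      refine hk_anti hσ (by linarith) ?_
      rw [← dist_eq_norm]
      have := dist_triangle x y x0
      rw [dist_comm x y] at this
      linarith
    · rw [show g0 y = 0 from Set.indicator_of_notMem hy _]; simp

/-- polar form -/
def blf (b : Fin m → Fin m → ℝ) (ξ v : 𝔼) : ℝ := ∑ i, ∑ j, b i j * (ξ i * v j + v i * ξ j)

lemma qf_line (b : Fin m → Fin m → ℝ) (ξ v : 𝔼) (t : ℝ) :
    qf b (ξ + t • v) = qf b ξ + t * blf b ξ v + t^2 * qf b v := by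
  unfold qf blf
  simp only [Finset.mul_sum, ← Finset.sum_add_distrib]
  refine Finset.sum_congr rfl fun i _ => Finset.sum_congr rfl fun j _ => ?_
  simp only [PiLp.add_apply, PiLp.smul_apply, smul_eq_mul]
  ring

lemma blf_line (b : Fin m → Fin m → ℝ) (ξ v : 𝔼) (t : ℝ) :
    blf b (ξ + t • v) v = blf b ξ v + t * (2 * qf b v) := by
  unfold qf blf
  simp only [Finset.mul_sum, ← Finset.sum_add_distrib]
  refine Finset.sum_congr rfl fun i _ => Finset.sum_congr rfl fun j _ => ?_
  simp only [PiLp.add_apply, PiLp.smul_apply, smul_eq_mul]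
  ring

lemma qf_contDiff (b : Fin m → Fin m → ℝ) : ContDiff ℝ (⊤ : ℕ∞) (qf b : 𝔼 → ℝ) := by
  unfold qf
  fun_prop

lemma quad_harm (c : ℝ) (L : 𝔼 →L[ℝ] ℝ) (b : Fin m → Fin m → ℝ) (x0 : 𝔼)
    (htr : ∑ i, b i i = 0) (x : 𝔼) :
    ContDiff ℝ (⊤ : ℕ∞) (fun x => c + L (x - x0) + qf b (x - x0)) ∧
      lap (fun x => c + L (x - x0) + qf b (x - x0)) x = 0 := by
  have hcd : ContDiff ℝ (⊤ : ℕ∞) (fun x => c + L (x - x0) + qf b (x - x0)) := by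
    have h1 := (qf_contDiff b).comp (contDiff_id.sub (contDiff_const (c := x0)))
    have h2 : ContDiff ℝ (⊤ : ℕ∞) (fun x => c + L (x - x0)) := by fun_prop
    exact h2.add h1
  refine ⟨hcd, ?_⟩
  have h1 : ∀ y v, fderiv ℝ (fun x => c + L (x - x0) + qf b (x - x0)) y v
      = L v + blf b (y - x0) v := fun y v => by
    rw [← ((hcd.differentiable (by simp)) y).lineDeriv_eq_fderiv]
    apply HasLineDerivAt.lineDeriv
    unfold HasLineDerivAt
    have e : (fun t : ℝ => c + L (y + t • v - x0) + qf b (y + t • v - x0)) =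
        fun t => (c + L (y - x0) + qf b (y - x0)) + t * (L v + blf b (y - x0) v) + t^2 * qf b v := by
      funext t
      rw [show y + t • v - x0 = (y - x0) + t • v by abel, qf_line, map_add, map_smul, smul_eq_mul]
      ring
    rw [e]
    have := ((((hasDerivAt_id (0:ℝ)).mul_const (L v + blf b (y - x0) v))).const_add
      (c + L (y - x0) + qf b (y - x0))).add (((hasDerivAt_id (0:ℝ)).pow 2).mul_const (qf b v))
    exact this.congr_deriv (by simp)
  have h2 : ∀ v, secondDeriv (fun x => c + L (x - x0) + qf b (x - x0)) x v = 2 * qf b v := fun v => by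
    have hd : DifferentiableAt ℝ (fun y => fderiv ℝ (fun x => c + L (x - x0) + qf b (x - x0)) y v) x :=
      (((cd2 hcd).fderiv_right (m := 1) (by norm_num)).clm_apply
        contDiff_const).differentiable one_ne_zero x
    unfold secondDeriv
    rw [← hd.lineDeriv_eq_fderiv]
    apply HasLineDerivAt.lineDeriv
    unfold HasLineDerivAt
    have e : (fun t : ℝ => fderiv ℝ (fun x => c + L (x - x0) + qf b (x - x0)) (x + t • v) v) =
        fun t => (L v + blf b (x - x0) v) + t * (2 * qf b v) := by
      funext t
      rw [h1, show x + t • v - x0 = (x - x0) + t • v by abel, blf_line]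
      ring
    rw [e]
    simpa using ((hasDerivAt_id (0:ℝ)).mul_const (2 * qf b v)).const_add (L v + blf b (x - x0) v)
  unfold lap
  simp only [h2]
  rw [← Finset.mul_sum]
  have e3 : ∀ i : Fin m, qf b (EuclideanSpace.single i 1) = b i i := fun i => by
    unfold qf
    rw [Finset.sum_eq_single i, Finset.sum_eq_single i]
    · simp
    · intro j _ hj; simp [hj]
    · simp
    · intro j _ hj; simp [hj]
    · simp
  simp only [e3, htr, mul_zero]

/-- truncation from below. -/
def trunc (N : ℝ) (u : 𝔼 → EReal) (x : 𝔼) : ℝ := (max (u x) ((-N : ℝ) : EReal)).toReal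

lemma trunc_coe {N : ℝ} {u : 𝔼 → EReal} {x : 𝔼} (h : u x < ⊤) :
    ((trunc N u x : ℝ) : EReal) = max (u x) ((-N : ℝ) : EReal) := by
  unfold trunc
  refine EReal.coe_toReal ?_ ?_
  · exact (max_lt h (EReal.coe_lt_top _)).ne
  · exact (lt_of_lt_of_le (EReal.bot_lt_coe _) (le_max_right _ _)).ne'

lemma trunc_ge {N : ℝ} {u : 𝔼 → EReal} {x : 𝔼} (h : u x < ⊤) : -N ≤ trunc N u x := by
  rw [← EReal.coe_le_coe_iff, trunc_coe h]; exact le_max_right _ _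

lemma trunc_VS {u : 𝔼 → EReal} {B : Set 𝔼} (hB : IsOpen B) (hu : SubharmonicOn u B) (N : ℝ) :
    VS (trunc N u) B := by
  obtain ⟨husc, htop, -, hmaj⟩ := hu
  refine ⟨?_, fun x0 hx0 L a h => ?_⟩
  · intro x hx c hc
    rw [← EReal.coe_lt_coe_iff, trunc_coe (htop x hx), max_lt_iff] at hc
    filter_upwards [husc x hx c hc.1, self_mem_nhdsWithin] with y hy hyB
    rw [← EReal.coe_lt_coe_iff, trunc_coe (htop y hyB)]
    exact max_lt hy hc.2
  · rcases le_or_gt (u x0) ((-N : ℝ) : EReal) with hle | hgt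
    · have e0 : trunc N u x0 = -N := by
        rw [← EReal.coe_eq_coe_iff, trunc_coe (htop x0 hx0)]; exact max_eq_right hle
      refine Finset.sum_nonneg fun i _ => ?_
      obtain ⟨δ, hδ, hb⟩ := Metric.eventually_nhds_iff.1 (h.and (hB.mem_nhds hx0))
      have key : ∀ s : ℝ, |s| < δ → 0 ≤ L (s • EuclideanSpace.single i 1) + s^2 * a i i := by
        intro s hs
        set e : 𝔼 := EuclideanSpace.single i 1 with he
        have hd : dist (x0 + s • e) x0 < δ := by
          rw [dist_eq_norm, add_sub_cancel_left, norm_smul]; simpa [he] using hs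
        obtain ⟨h1, h2⟩ := hb hd
        rw [add_sub_cancel_left, e0] at h1
        have h3 := trunc_ge (N := N) (htop _ h2)
        have e3 : qf a (s • e) = s^2 * a i i := by
          unfold qf
          rw [Finset.sum_eq_single i, Finset.sum_eq_single i]
          · simp [he]; ring
          · intro j _ hj; simp [he, hj]
          · simp
          · intro j _ hj; simp [he, hj]
          · simp
        rw [e3] at h1
        linarith
      have k1 := key (δ / 2) (by rw [abs_of_pos (by linarith)]; linarith)
      have k2 := key (-(δ / 2)) (by rw [abs_neg, abs_of_pos (by linarith)]; linarith)
      rw [neg_smul, map_neg] at k2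
      have : 0 ≤ (δ/2)^2 * a i i := by nlinarith
      exact nonneg_of_mul_nonneg_right this (by positivity)
    · by_contra htr
      push Not at htr
      have hm : 0 < (m:ℝ) := by
        rcases Nat.eq_zero_or_pos m with h0 | h0
        · subst h0; simp at htr
        · exact_mod_cast h0
      set κ := -(∑ i, a i i) / m with hκ
      have hκ0 : 0 < κ := div_pos (by linarith) hm
      set c := trunc N u x0 with hc
      have hcu : (c : EReal) = u x0 := by
        rw [hc, trunc_coe (htop x0 hx0)]; exact max_eq_left hgt.le
      obtain ⟨δ, hδ, hb⟩ := Metric.eventually_nhds_iff.1 (h.and (hB.mem_nhds hx0))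
      set r := δ / 2 with hr
      have hr0 : 0 < r := by positivity
      have hcb : ∀ x ∈ closedBall x0 r, dist x x0 < δ := fun x hx => by
        rw [mem_closedBall] at hx; linarith
      set b : Fin m → Fin m → ℝ := fun i j => a i j + if i = j then κ else 0 with hbdef
      have hbtr : ∑ i, b i i = 0 := by
        simp only [hbdef, Finset.sum_add_distrib]
        simp [hκ]
        field_simp
        ring
      have hQ := quad_harm (c - κ * r^2) L b x0 hbtr
      have := hmaj x0 r hr0 (fun x hx => (hb (hcb x hx)).2) _ (hQ 0).1.continuous.continuousOn
        (fun w _ => ⟨(cd2 (hQ 0).1).contDiffAt, (hQ w).2⟩) (fun w hw => ?_) x0 (mem_ball_self hr0)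
      · rw [← hcu, EReal.coe_le_coe_iff] at this
        have e0 : qf b (0 : 𝔼) = 0 := by simp [qf]
        simp only [sub_self, map_zero, e0] at this
        have : 0 < κ * r^2 := by positivity
        linarith
      · have hw' := hb (hcb w (sphere_subset_closedBall hw))
        have h1 : u w ≤ ((trunc N u w : ℝ) : EReal) := by
          rw [trunc_coe (htop w hw'.2)]; exact le_max_left _ _
        refine h1.trans (EReal.coe_le_coe_iff.2 (hw'.1.trans ?_))
        simp only [hbdef]
        rw [qf_add, qf_diag]
        rw [mem_sphere, dist_eq_norm] at hw
        rw [hw]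
        linarith

lemma VS.sup {f g : 𝔼 → ℝ} {B : Set 𝔼} (hf : VS f B) (hg : VS g B) :
    VS (fun x => max (f x) (g x)) B := by
  refine ⟨?_, fun x0 hx0 L a h => ?_⟩
  · intro x hx c hc
    obtain ⟨h1, h2⟩ := max_lt_iff.1 hc
    filter_upwards [hf.1 x hx c h1, hg.1 x hx c h2] with y hy1 hy2
    exact max_lt hy1 hy2
  · rcases le_total (f x0) (g x0) with hle | hle
    · refine hg.2 x0 hx0 L a ?_
      filter_upwards [h] with x hx
      rw [max_eq_right hle] at hx
      exact (le_max_right _ _).trans hx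
    · refine hf.2 x0 hx0 L a ?_
      filter_upwards [h] with x hx
      rw [max_eq_left hle] at hx
      exact (le_max_left _ _).trans hx

lemma VS.smul {f : 𝔼 → ℝ} {B : Set 𝔼} (hf : VS f B) {t : ℝ} (ht : 0 < t) :
    VS (fun x => t * f x) B := by
  refine ⟨?_, fun x0 hx0 L a h => ?_⟩
  · intro x hx c hc
    have : f x < c / t := by rw [lt_div_iff₀ ht]; linarith
    filter_upwards [hf.1 x hx _ this] with y hy
    rw [lt_div_iff₀ ht] at hy; linarith
  · have h1 := hf.2 x0 hx0 (t⁻¹ • L) (fun i j => t⁻¹ * a i j) (by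
      filter_upwards [h] with x hx
      rw [qf_smul, smul_apply, smul_eq_mul]
      have e : f x = t⁻¹ * (t * f x) := by field_simp
      have e2 : f x0 = t⁻¹ * (t * f x0) := by field_simp
      rw [e, e2, ← mul_add, ← mul_add]
      have := inv_pos.2 ht
      gcongr)
    rw [← Finset.mul_sum] at h1
    exact nonneg_of_mul_nonneg_right h1 (inv_pos.2 ht)

lemma usc_aem {α : Type*} [LinearOrder α] [TopologicalSpace α] [OrderTopology α]
    [SecondCountableTopology α] [MeasurableSpace α] [BorelSpace α] {f : 𝔼 → α} {B : Set 𝔼}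
    (hB : IsOpen B) (hf : UpperSemicontinuousOn f B) : AEMeasurable f (volume.restrict B) := by
  refine aemeasurable_restrict_of_measurable_subtype hB.measurableSet ?_
  have h : UpperSemicontinuous (fun x : B => f x) := upperSemicontinuousOn_iff_restrict.2 hf
  exact h.measurable

lemma trunc_of_lt {N : ℝ} {u : 𝔼 → EReal} {x : 𝔼} (h : ((-N : ℝ) : EReal) ≤ u x) :
    trunc N u x = (u x).toReal := by
  unfold trunc; rw [max_eq_left h]

lemma trunc_bot {N : ℝ} {u : 𝔼 → EReal} {x : 𝔼} (h : u x = ⊥) : trunc N u x = -N := by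
  unfold trunc; rw [h]; simp

lemma trunc_ge_toReal {N : ℝ} {u : 𝔼 → EReal} {x : 𝔼} (h : u x ≠ ⊥) (h2 : u x < ⊤) :
    (u x).toReal ≤ trunc N u x := by
  rw [← EReal.coe_le_coe_iff, trunc_coe h2, EReal.coe_toReal h2.ne h]
  exact le_max_left _ _

lemma exists_trunc_eq {u : 𝔼 → EReal} {x : 𝔼} (h : u x ≠ ⊥) (h2 : u x < ⊤) :
    ∃ n0 : ℕ, ∀ n : ℕ, n0 ≤ n → trunc (n:ℝ) u x = (u x).toReal := by
  obtain ⟨n0, hn0⟩ := exists_nat_ge (-(u x).toReal)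
  refine ⟨n0, fun n hn => trunc_of_lt ?_⟩
  rw [← EReal.coe_toReal h2.ne h, EReal.coe_le_coe_iff]
  have : (n0:ℝ) ≤ n := by exact_mod_cast hn
  linarith

lemma trunc_anti {N N' : ℝ} (h : N ≤ N') {u : 𝔼 → EReal} {x : 𝔼} (h2 : u x < ⊤) :
    trunc N' u x ≤ trunc N u x := by
  rw [← EReal.coe_le_coe_iff, trunc_coe h2, trunc_coe h2]
  exact max_le_max le_rfl (EReal.coe_le_coe_iff.2 (by linarith))

lemma toReal_le_of_trunc {N M : ℝ} {u : 𝔼 → EReal} {x : 𝔼} (h : trunc N u x ≤ M) (h0 : u x ≠ ⊥)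
    (h2 : u x < ⊤) : (u x).toReal ≤ M := (trunc_ge_toReal h0 h2).trans h

lemma loc_int {u : 𝔼 → EReal} {B : Set 𝔼} (hB : IsOpen B) (hu : SubharmonicOn u B) {x0 : 𝔼}
    (hx : u x0 ≠ ⊥) {ρ : ℝ} (hρ : 0 < ρ) (hsub : closedBall x0 (4 * ρ) ⊆ B) :
    (∀ᵐ x ∂(volume.restrict (ball x0 ρ)), u x ≠ ⊥) ∧
      IntegrableOn (fun x => (u x).toReal) (ball x0 ρ) := by
  have htop := hu.2.1
  have hx0 : x0 ∈ closedBall x0 (4 * ρ) := mem_closedBall_self (by linarith)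
  have hbs : ball x0 ρ ⊆ closedBall x0 (4 * ρ) :=
    ball_subset_closedBall.trans (closedBall_subset_closedBall (by linarith))
  obtain ⟨M, hM⟩ := usc_bdd (isCompact_closedBall x0 (4 * ρ)) ((trunc_VS hB hu 0).1.mono hsub)
  obtain ⟨K, hK0, hK⟩ := VS_L1 (m := m) hρ
  have hle : ∀ (n : ℕ), ∀ x ∈ closedBall x0 (4 * ρ), trunc n u x ≤ M := fun n x hx =>
    (trunc_anti (Nat.cast_nonneg n) (htop x (hsub hx))).trans (hM x hx)
  have hn : ∀ n : ℕ, ∫⁻ x in ball x0 ρ, ENNReal.ofReal (M - trunc n u x) ≤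
      ENNReal.ofReal (K * (M - (u x0).toReal)) := fun n => by
    obtain ⟨h1, h2⟩ := hK _ _ ((trunc_VS hB hu n).sub_const M) x0 (n + M) hsub
      (fun x hx => by have := trunc_ge (N := (n:ℝ)) (htop x (hsub hx)); linarith)
      (fun x hx => by have := hle n x hx; linarith)
    have h3 : IntegrableOn (fun x => M - trunc n u x) (ball x0 ρ) := by
      have := h1.neg
      refine this.congr (Eventually.of_forall fun x => ?_)
      simp
    rw [← ofReal_integral_eq_lintegral_ofReal h3]
    · apply ENNReal.ofReal_le_ofReal
      simp only [neg_sub] at h2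
      refine h2.trans ?_
      gcongr
      exact trunc_ge_toReal hx (htop x0 (hsub hx0))
    · refine (ae_restrict_iff' measurableSet_ball).2 (Eventually.of_forall fun x hx => ?_)
      have := hle n x (hbs hx)
      simp only [Pi.zero_apply]
      linarith
  have hmeas : ∀ n : ℕ, AEMeasurable (fun x => ENNReal.ofReal (M - trunc n u x))
      (volume.restrict (ball x0 ρ)) := fun n => by
    have h1 : AEMeasurable (trunc n u) (volume.restrict (ball x0 ρ)) :=
      usc_aem isOpen_ball ((trunc_VS hB hu n).1.mono (hbs.trans hsub))
    exact (h1.const_sub M).ennreal_ofReal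
  have hG : ∫⁻ x in ball x0 ρ, ⨆ n : ℕ, ENNReal.ofReal (M - trunc n u x) < ⊤ := by
    rw [lintegral_iSup' hmeas]
    · exact lt_of_le_of_lt (iSup_le hn) ENNReal.ofReal_lt_top
    · refine (ae_restrict_iff' measurableSet_ball).2 (Eventually.of_forall fun x hx => ?_)
      intro i j hij
      apply ENNReal.ofReal_le_ofReal
      have := trunc_anti (N := (i:ℝ)) (N' := (j:ℝ)) (by exact_mod_cast hij) (htop x (hsub (hbs hx)))
      linarith
  have hae : ∀ᵐ x ∂(volume.restrict (ball x0 ρ)), u x ≠ ⊥ := by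
    filter_upwards [ae_lt_top' (AEMeasurable.iSup hmeas) hG.ne] with x hx hbot
    refine hx.ne (iSup_eq_top.2 fun b hb => ?_)
    obtain ⟨n, hn⟩ := exists_nat_gt (b.toReal - M)
    refine ⟨n, ?_⟩
    rw [trunc_bot hbot, ENNReal.lt_ofReal_iff_toReal_lt hb.ne]
    linarith
  refine ⟨hae, ?_⟩
  have hm : AEStronglyMeasurable (fun x => (u x).toReal) (volume.restrict (ball x0 ρ)) := by
    have : AEMeasurable u (volume.restrict (ball x0 ρ)) :=
      usc_aem isOpen_ball (hu.1.mono (hbs.trans hsub))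
    exact (measurable_ereal_toReal.comp_aemeasurable this).aestronglyMeasurable
  have h1 : IntegrableOn (fun x => M - (u x).toReal) (ball x0 ρ) := by
    refine ⟨aestronglyMeasurable_const.sub hm, ?_⟩
    rw [HasFiniteIntegral]
    refine lt_of_le_of_lt (lintegral_mono_ae ?_) hG
    filter_upwards [hae, ae_restrict_mem measurableSet_ball] with x hx hxb
    have ht := htop x (hsub (hbs hxb))
    obtain ⟨n, hn⟩ := exists_trunc_eq hx ht
    have := hle n x (hbs hxb)
    rw [hn n le_rfl] at this
    rw [Real.enorm_of_nonneg (by linarith)]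
    refine le_trans ?_ (le_iSup _ n)
    rw [hn n le_rfl]
  have h2 := (integrableOn_const (C := M) (μ := volume) (s := ball x0 ρ)
    measure_ball_lt_top.ne).sub h1
  refine h2.congr (Eventually.of_forall fun x => ?_)
  simp

lemma sub_loc {u : 𝔼 → EReal} (hu : SubharmonicOn u (ball 0 1)) :
    ∀ x ∈ ball (0:𝔼) 1, ∃ ε, 0 < ε ∧ (∀ᵐ y ∂(volume.restrict (ball x ε)), u y ≠ ⊥) ∧
      IntegrableOn (fun x => (u x).toReal) (ball x ε) := by
  set S : Set 𝔼 := {x | ∃ ε, 0 < ε ∧ (∀ᵐ y ∂(volume.restrict (ball x ε)), u y ≠ ⊥) ∧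
      IntegrableOn (fun x => (u x).toReal) (ball x ε)} with hS
  have hsubball : ∀ x ε y δ, dist y x + δ ≤ ε → (∀ᵐ y ∂(volume.restrict (ball x ε)), u y ≠ ⊥) ∧
      IntegrableOn (fun x => (u x).toReal) (ball x ε) → 
      (∀ᵐ z ∂(volume.restrict (ball y δ)), u z ≠ ⊥) ∧
      IntegrableOn (fun x => (u x).toReal) (ball y δ) := by
    intro x ε y δ h h2
    have hs : ball y δ ⊆ ball x ε := ball_subset_ball' (by linarith)
    exact ⟨ae_restrict_of_ae_restrict_of_subset hs h2.1, h2.2.mono_set hs⟩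
  have hopen : IsOpen S := by
    rw [Metric.isOpen_iff]
    rintro x ⟨ε, hε, h⟩
    refine ⟨ε/2, by positivity, fun y hy => ⟨ε/2, by positivity, hsubball x ε y _ ?_ h⟩⟩
    rw [mem_ball] at hy; linarith
  have hin : ∀ x ∈ ball (0:𝔼) 1, ∀ ρ, 0 < ρ → closedBall x (5 * ρ) ⊆ ball 0 1 → ∀ y, dist y x < ρ →
      u y ≠ ⊥ → x ∈ S := by
    intro x hx ρ hρ hb y hy hyb
    have h1 := loc_int isOpen_ball hu hyb hρ
      ((closedBall_subset_closedBall' (by linarith)).trans hb)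
    exact ⟨ρ - dist x y, by rw [dist_comm]; linarith, hsubball y ρ x _ (by linarith) h1⟩
  have hrad : ∀ x ∈ ball (0:𝔼) 1, ∃ ρ, 0 < ρ ∧ closedBall x (5 * ρ) ⊆ ball 0 1 := by
    intro x hx
    rw [mem_ball_zero_iff] at hx
    refine ⟨(1 - ‖x‖) / 6, by linarith, fun y hy => ?_⟩
    rw [mem_closedBall, dist_eq_norm] at hy
    rw [mem_ball_zero_iff]
    have := norm_le_norm_add_norm_sub' y x
    linarith
  refine IsPreconnected.subset_of_closure_inter_subset (convex_ball (0:𝔼) 1).isPreconnected hopen ?_ ?_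
  · obtain ⟨x, hx, hxb⟩ := hu.2.2.1
    obtain ⟨ρ, hρ, hb⟩ := hrad x hx
    exact ⟨x, hx, hin x hx ρ hρ hb x (by simpa using hρ) hxb⟩
  · rintro x ⟨hxc, hx⟩
    obtain ⟨ρ, hρ, hb⟩ := hrad x hx
    obtain ⟨y, hy, hyx⟩ := Metric.mem_closure_iff.1 hxc (ρ/2) (by positivity)
    obtain ⟨ε, hε, hae, -⟩ := hy
    have hδ : 0 < min ε (ρ/2) := by positivity
    have h1 : ∀ᵐ z ∂(volume.restrict (ball y (min ε (ρ/2)))), u z ≠ ⊥ :=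
      ae_restrict_of_ae_restrict_of_subset (ball_subset_ball (min_le_left _ _)) hae
    have h2 : ∃ z ∈ ball y (min ε (ρ/2)), u z ≠ ⊥ := by
      by_contra hcon
      push Not at hcon
      have h3 : ∀ᵐ z ∂(volume.restrict (ball y (min ε (ρ/2)))), False := by
        filter_upwards [h1, ae_restrict_mem measurableSet_ball] with z hz hzb
        exact hz (hcon z hzb)
      rw [Filter.eventually_false_iff_eq_bot, ae_eq_bot, Measure.restrict_eq_zero] at h3
      exact (measure_ball_pos volume y hδ).ne' h3
    obtain ⟨z, hz, hzb⟩ := h2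
    refine hin x hx ρ hρ hb z ?_ hzb
    rw [mem_ball, lt_min_iff] at hz
    have := dist_triangle z y x
    rw [dist_comm y x] at this
    linarith

lemma sub_ae {u : 𝔼 → EReal} (hu : SubharmonicOn u (ball 0 1)) :
    ∀ᵐ x, x ∈ ball (0:𝔼) 1 → u x ≠ ⊥ := by
  have : volume {x | x ∈ ball (0:𝔼) 1 ∧ u x = ⊥} = 0 := by
    refine measure_null_of_locally_null _ fun x hx => ?_
    obtain ⟨ε, hε, h, -⟩ := sub_loc hu x hx.1
    refine ⟨ball x ε ∩ {x | x ∈ ball (0:𝔼) 1 ∧ u x = ⊥}, inter_mem (mem_nhdsWithin_of_mem_nhds (ball_mem_nhds x hε)) self_mem_nhdsWithin, ?_⟩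
    rw [ae_restrict_iff' measurableSet_ball] at h
    refine measure_mono_null ?_ h
    rintro y ⟨hy1, hy2⟩ hy3
    exact hy3 hy1 hy2.2
  rw [ae_iff]
  refine measure_mono_null ?_ this
  intro x hx
  simpa using hx

lemma sub_int {u : 𝔼 → EReal} (hu : SubharmonicOn u (ball 0 1)) {K : Set 𝔼} (hK : IsCompact K)
    (hKs : K ⊆ ball 0 1) : IntegrableOn (fun x => (u x).toReal) K := by
  refine LocallyIntegrableOn.integrableOn_isCompact (fun x hx => ?_) hK
  obtain ⟨ε, hε, -, h⟩ := sub_loc hu x (hKs hx)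
  exact ⟨ball x ε, mem_nhdsWithin_of_mem_nhds (ball_mem_nhds x hε), h⟩

lemma lap_add_eq {f g : 𝔼 → ℝ} (hf : ContDiff ℝ (⊤ : ℕ∞) f) (hg : ContDiff ℝ (⊤ : ℕ∞) g) (x : 𝔼) :
    lap (fun y => f y + g y) x = lap f x + lap g x := by
  have hf1 : ∀ y, DifferentiableAt ℝ f y := fun y => hf.differentiable (by simp) y
  have hg1 : ∀ y, DifferentiableAt ℝ g y := fun y => hg.differentiable (by simp) y
  have hf2 : ∀ v : 𝔼, DifferentiableAt ℝ (fun y => fderiv ℝ f y v) x := fun v =>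
    (((cd2 hf).fderiv_right (m := 1) (by norm_num)).clm_apply contDiff_const).differentiable
      one_ne_zero x
  have hg2 : ∀ v : 𝔼, DifferentiableAt ℝ (fun y => fderiv ℝ g y v) x := fun v =>
    (((cd2 hg).fderiv_right (m := 1) (by norm_num)).clm_apply contDiff_const).differentiable
      one_ne_zero x
  unfold lap secondDeriv
  rw [← Finset.sum_add_distrib]
  refine Finset.sum_congr rfl fun i _ => ?_
  have h1 : (fun y => fderiv ℝ (fun z => f z + g z) y (EuclideanSpace.single i 1)) =
      fun y => fderiv ℝ f y (EuclideanSpace.single i 1) +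
        fderiv ℝ g y (EuclideanSpace.single i 1) := by
    funext y
    rw [fderiv_fun_add (hf1 y) (hg1 y)]
    rfl
  rw [h1, fderiv_fun_add (hf2 _) (hg2 _)]
  rfl

lemma setint_lap {φ : 𝔼 → ℝ} (hs : tsupport φ ⊆ ball 0 1) (f : 𝔼 → ℝ) :
    ∫ x in ball (0:𝔼) 1, f x * lap φ x = ∫ x, f x * lap φ x :=
  setIntegral_eq_integral_of_forall_compl_eq_zero fun x hx => by
    rw [lap_zero_off x (fun h => hx (hs h)), mul_zero]

lemma int_mul_lap {φ : 𝔼 → ℝ} (hφ : ContDiff ℝ (⊤ : ℕ∞) φ) (hc : HasCompactSupport φ)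
    {f : 𝔼 → ℝ} (hf : IntegrableOn f (tsupport φ)) : Integrable (fun x => f x * lap φ x) := by
  obtain ⟨C, hC⟩ := (lap_cont hφ).bounded_above_of_compact_support (lap_hcs hc)
  have h1 : IntegrableOn (fun x => f x * lap φ x) (tsupport φ) :=
    Integrable.mul_bdd (c := C) hf (lap_cont hφ).aestronglyMeasurable (Eventually.of_forall hC)
  exact h1.integrable_of_forall_notMem_eq_zero fun x hx => by rw [lap_zero_off x hx, mul_zero]

lemma trunc_abs_le {u : 𝔼 → EReal} {x : 𝔼} {M : ℝ} (n : ℕ) (h : u x ≠ ⊥) (h2 : u x < ⊤)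
    (hM : trunc 0 u x ≤ M) : |trunc n u x| ≤ |(u x).toReal| + |M| := by
  have h3 := trunc_ge_toReal (N := (n:ℝ)) h h2
  have h4 := (trunc_anti (Nat.cast_nonneg n) h2).trans hM
  rw [abs_le]
  constructor
  · have := neg_abs_le (u x).toReal
    have := abs_nonneg M
    linarith
  · have := le_abs_self M
    have := abs_nonneg (u x).toReal
    linarith

/-- The function `max (t v) (u - s)`. -/
def Wf (u v : 𝔼 → EReal) (t s : ℝ) (x : 𝔼) : ℝ := max (t * (v x).toReal) ((u x).toReal - s)

lemma wpos {u v : 𝔼 → EReal} (hu : SubharmonicOn u (ball 0 1)) (hv : SubharmonicOn v (ball 0 1))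
    {t s : ℝ} (ht : 0 < t) {ψ : 𝔼 → ℝ} (hψ : ContDiff ℝ (⊤ : ℕ∞) ψ) (hc : HasCompactSupport ψ)
    (hs : tsupport ψ ⊆ ball 0 1) (h0 : ∀ x, 0 ≤ ψ x) :
    0 ≤ ∫ x in ball (0:𝔼) 1, Wf u v t s x * lap ψ x := by
  have hVS : ∀ n : ℕ, VS (fun x => max (t * trunc n v x) (trunc n u x - s)) (ball 0 1) := fun n =>
    ((trunc_VS isOpen_ball hv n).smul ht).sup ((trunc_VS isOpen_ball hu n).sub_const s)
  have hpos : ∀ n : ℕ, 0 ≤ ∫ x in ball (0:𝔼) 1,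
      max (t * trunc n v x) (trunc n u x - s) * lap ψ x := fun n => by
    rw [setint_lap hs (fun x => max (t * trunc n v x) (trunc n u x - s))]
    refine VS_pair (hVS n) (N := n + s) (fun x hx => ?_) hψ hc hs h0
    refine le_trans ?_ (le_max_right _ _)
    have := trunc_ge (N := (n:ℝ)) (hu.2.1 x hx)
    linarith
  obtain ⟨Mu, hMu⟩ := usc_bdd hc ((trunc_VS isOpen_ball hu 0).1.mono hs)
  obtain ⟨Mv, hMv⟩ := usc_bdd hc ((trunc_VS isOpen_ball hv 0).1.mono hs)
  have hKtop : volume (tsupport ψ) ≠ ⊤ := (hc.measure_lt_top).ne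
  have hcst : ∀ c : ℝ, IntegrableOn (fun _ => c) (tsupport ψ) := fun c => integrableOn_const hKtop
  have hlim : Tendsto (fun n : ℕ => ∫ x in ball (0:𝔼) 1,
      max (t * trunc n v x) (trunc n u x - s) * lap ψ x) atTop
      (𝓝 (∫ x in ball (0:𝔼) 1, Wf u v t s x * lap ψ x)) := by
    refine tendsto_integral_of_dominated_convergence
      (fun x => ‖(t * (|(v x).toReal| + |Mv|) + (|(u x).toReal| + |Mu| + |s|)) * lap ψ x‖) ?_ ?_ ?_ ?_
    · intro n
      have h1 : AEMeasurable (fun x => max (t * trunc n v x) (trunc n u x - s))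
        (volume.restrict (ball 0 1)) := usc_aem isOpen_ball (hVS n).1
      exact h1.aestronglyMeasurable.mul (lap_cont hψ).aestronglyMeasurable
    · refine (int_mul_lap hψ hc ?_).norm.integrableOn
      exact (((sub_int hv hc hs).abs.add (hcst _)).const_mul t).add
        (((sub_int hu hc hs).abs.add (hcst _)).add (hcst _))
    · intro n
      filter_upwards [ae_restrict_mem measurableSet_ball, ae_restrict_of_ae (sub_ae hu),
        ae_restrict_of_ae (sub_ae hv)] with x hx hux hvx
      by_cases hxs : x ∈ tsupport ψ
      · rw [norm_mul, norm_mul]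
        refine mul_le_mul_of_nonneg_right ?_ (norm_nonneg _)
        have a1 := trunc_abs_le n (hux hx) (hu.2.1 x hx) (hMu x hxs)
        have a2 := trunc_abs_le n (hvx hx) (hv.2.1 x hx) (hMv x hxs)
        have a3 : 0 ≤ t * (|(v x).toReal| + |Mv|) := by positivity
        have a4 : |t * trunc n v x| ≤ t * (|(v x).toReal| + |Mv|) := by
          rw [abs_mul, abs_of_pos ht]; gcongr
        have a5 : |trunc n u x - s| ≤ |(u x).toReal| + |Mu| + |s| :=
          (abs_sub _ _).trans (by linarith)
        rw [Real.norm_eq_abs, Real.norm_eq_abs, abs_of_nonneg (a := _ + _) (by positivity)]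
        refine abs_max_le_max_abs_abs.trans (max_le ?_ ?_)
        · refine a4.trans ?_
          have : 0 ≤ |(u x).toReal| + |Mu| + |s| := by positivity
          linarith
        · linarith
      · rw [lap_zero_off x hxs, mul_zero, mul_zero]
    · filter_upwards [ae_restrict_mem measurableSet_ball, ae_restrict_of_ae (sub_ae hu),
        ae_restrict_of_ae (sub_ae hv)] with x hx hux hvx
      obtain ⟨n1, hn1⟩ := exists_trunc_eq (hux hx) (hu.2.1 x hx)
      obtain ⟨n2, hn2⟩ := exists_trunc_eq (hvx hx) (hv.2.1 x hx)
      refine tendsto_const_nhds.congr' ?_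
      filter_upwards [eventually_ge_atTop n1, eventually_ge_atTop n2] with n h1 h2
      rw [hn1 n h1, hn2 n h2]
      rfl
  exact ge_of_tendsto' hlim hpos

lemma Wf_int {u v : 𝔼 → EReal} (hu : SubharmonicOn u (ball 0 1)) (hv : SubharmonicOn v (ball 0 1))
    (t s : ℝ) {K : Set 𝔼} (hK : IsCompact K) (hs : K ⊆ ball 0 1) : IntegrableOn (Wf u v t s) K :=
  ((sub_int hv hK hs).const_mul t).sup
    ((sub_int hu hK hs).sub (integrableOn_const hK.measure_lt_top.ne))

lemma test_le {u v : 𝔼 → EReal} {μ : Measure 𝔼}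
    (hu : SubharmonicOn u (ball 0 1)) (hv : SubharmonicOn v (ball 0 1))
    (hμ : IsRieszMeasureOf u (ball 0 1) μ) (hle : ∀ x ∈ ball (0:𝔼) 1, v x ≤ u x)
    (hpolar : μ {x | x ∈ ball (0:𝔼) 1 ∧ u x ≠ ⊥} = 0)
    {t s : ℝ} (ht : 1 < t)
    {φ : 𝔼 → ℝ} (hφ : ContDiff ℝ (⊤ : ℕ∞) φ) (hc : HasCompactSupport φ)
    (hs : tsupport φ ⊆ ball 0 1) (h0 : ∀ x, 0 ≤ φ x) (hφμ : Integrable φ μ) :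
    ∫ x, φ x ∂μ ≤ ∫ x in ball (0:𝔼) 1, Wf u v t s x * lap φ x := by
  set c : ℝ := -s / (t - 1) with hcdef
  have hUo : IsOpen {x | x ∈ ball (0:𝔼) 1 ∧ u x < (c : EReal)} := by
    rw [isOpen_iff_mem_nhds]
    rintro x ⟨hx, hxc⟩
    have h1 := hu.1 x hx _ hxc
    rw [nhdsWithin_eq_nhds.2 (isOpen_ball.mem_nhds hx)] at h1
    filter_upwards [h1, isOpen_ball.mem_nhds hx] with y hy1 hy2 using ⟨hy2, hy1⟩
  obtain ⟨f0, hf0s, hf0, hf0r⟩ := hUo.exists_contDiff_support_eq (n := ⊤)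
  have hf0nn : ∀ x, 0 ≤ f0 x := fun x => (hf0r (Set.mem_range_self x)).1
  set χ : ℕ → 𝔼 → ℝ := fun n x => Real.smoothTransition (n * f0 x - 1) with hχ
  have hχc : ∀ n, ContDiff ℝ (⊤ : ℕ∞) (χ n) := fun n =>
    Real.smoothTransition.contDiff.comp ((contDiff_const.mul hf0).sub contDiff_const)
  have hψ : ∀ n, ContDiff ℝ (⊤ : ℕ∞) (fun x => φ x * χ n x) := fun n => hφ.mul (hχc n)
  have hψB : ∀ n, ContDiff ℝ (⊤ : ℕ∞) (fun x => φ x * (1 - χ n x)) := fun n =>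
    hφ.mul (contDiff_const.sub (hχc n))
  have hψs : ∀ n, tsupport (fun x => φ x * χ n x) ⊆ tsupport φ := fun n =>
    tsupport_mul_subset_left
  have hψBs : ∀ n, tsupport (fun x => φ x * (1 - χ n x)) ⊆ tsupport φ := fun n =>
    tsupport_mul_subset_left
  have hψc : ∀ n, HasCompactSupport (fun x => φ x * χ n x) := fun n => hc.mul_right
  have hψBc : ∀ n, HasCompactSupport (fun x => φ x * (1 - χ n x)) := fun n => hc.mul_right
  have hψU : ∀ n, tsupport (fun x => φ x * χ n x) ⊆ {x | x ∈ ball (0:𝔼) 1 ∧ u x < (c : EReal)} := by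
    intro n x hx
    have h1 : x ∈ tsupport (χ n) := tsupport_mul_subset_right hx
    have h2 : tsupport (χ n) ⊆ {x | 1 ≤ n * f0 x} := by
      refine closure_minimal (fun y hy => ?_)
        (isClosed_le continuous_const (continuous_const.mul hf0.continuous))
      by_contra hcon
      simp only [Set.mem_ofPred_eq, not_le] at hcon
      exact hy (Real.smoothTransition.zero_of_nonpos (by linarith))
    have h3 := h2 h1
    rw [← hf0s]
    intro h4
    simp only [Set.mem_ofPred_eq, h4, mul_zero] at h3
    linarith
  have key : ∀ n, ∫ x, φ x * χ n x ∂μ ≤ ∫ x in ball (0:𝔼) 1, Wf u v t s x * lap φ x := by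
    intro n
    have e0 : φ = fun x => φ x * χ n x + φ x * (1 - χ n x) := by funext x; ring
    have i1 := (int_mul_lap (hψ n) (hψc n)
      (Wf_int hu hv t s (hψc n) ((hψs n).trans hs))).integrableOn (s := ball 0 1)
    have i2 := (int_mul_lap (hψB n) (hψBc n)
      (Wf_int hu hv t s (hψBc n) ((hψBs n).trans hs))).integrableOn (s := ball 0 1)
    have e1 : ∫ x in ball (0:𝔼) 1, Wf u v t s x * lap φ x =
        (∫ x in ball (0:𝔼) 1, Wf u v t s x * lap (fun x => φ x * χ n x) x) +
        ∫ x in ball (0:𝔼) 1, Wf u v t s x * lap (fun x => φ x * (1 - χ n x)) x := by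
      rw [← integral_add i1 i2]
      congr 1
      funext x
      conv_lhs => rw [e0, lap_add_eq (hψ n) (hψB n)]
      ring
    have p2 := wpos hu hv (s := s) (by linarith : 0 < t) (hψB n) (hψBc n) ((hψBs n).trans hs)
      (fun x => mul_nonneg (h0 x) (sub_nonneg.2 (Real.smoothTransition.le_one _)))
    have e2 : ∫ x in ball (0:𝔼) 1, Wf u v t s x * lap (fun x => φ x * χ n x) x =
        ∫ x in ball (0:𝔼) 1, ((u x).toReal * lap (fun x => φ x * χ n x) x -
          s * lap (fun x => φ x * χ n x) x) := by
      refine integral_congr_ae ?_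
      filter_upwards [ae_restrict_mem measurableSet_ball, ae_restrict_of_ae (sub_ae hu),
        ae_restrict_of_ae (sub_ae hv)] with x hx hux hvx
      by_cases hxs : x ∈ tsupport (fun x => φ x * χ n x)
      · have hxU := (hψU n hxs).2
        have hut := hu.2.1 x hx
        have hvt := hv.2.1 x hx
        have hvu := hle x hx
        rw [← EReal.coe_toReal hut.ne (hux hx), EReal.coe_lt_coe_iff] at hxU
        rw [← EReal.coe_toReal hut.ne (hux hx), ← EReal.coe_toReal hvt.ne (hvx hx),
          EReal.coe_le_coe_iff] at hvu
        have ht1 : 0 < t - 1 := by linarith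
        rw [hcdef, lt_div_iff₀ ht1] at hxU
        have : t * (v x).toReal ≤ (u x).toReal - s := by nlinarith
        unfold Wf
        rw [max_eq_right this]
        ring
      · rw [lap_zero_off x hxs]; ring
    have e3 : ∫ x in ball (0:𝔼) 1, ((u x).toReal * lap (fun x => φ x * χ n x) x -
          s * lap (fun x => φ x * χ n x) x) = ∫ x, φ x * χ n x ∂μ := by
      rw [integral_sub, hμ.2.2 _ (hψ n) (hψc n) ((hψs n).trans hs),
        setint_lap ((hψs n).trans hs) (fun _ => s), integral_const_mul,
        integral_lap (hψ n) (hψc n)]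
      · ring
      · exact (int_mul_lap (hψ n) (hψc n) (sub_int hu (hψc n) ((hψs n).trans hs))).integrableOn
      · exact (((lap_cont (hψ n)).integrable_of_hasCompactSupport (lap_hcs (hψc n))).const_mul
          s).integrableOn
    linarith
  have hlim : Tendsto (fun n : ℕ => ∫ x, φ x * χ n x ∂μ) atTop (𝓝 (∫ x, φ x ∂μ)) := by
    refine tendsto_integral_of_dominated_convergence φ ?_ hφμ ?_ ?_
    · intro n
      exact (hψ n).continuous.aestronglyMeasurable
    · intro n
      refine Eventually.of_forall fun x => ?_
      have h1 : 0 ≤ χ n x := Real.smoothTransition.nonneg _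
      have h2 : χ n x ≤ 1 := Real.smoothTransition.le_one _
      rw [Real.norm_of_nonneg (mul_nonneg (h0 x) h1)]
      exact mul_le_of_le_one_right (h0 x) h2
    · have hae : ∀ᵐ x ∂μ, ¬ (x ∈ ball (0:𝔼) 1 ∧ u x ≠ ⊥) := by
        rw [ae_iff]
        simpa using hpolar
      filter_upwards [hae] with x hx
      by_cases hxs : x ∈ ball (0:𝔼) 1
      · have hb : u x = ⊥ := by by_contra hcon; exact hx ⟨hxs, hcon⟩
        have hxU : x ∈ f0.support := by
          rw [hf0s]; exact ⟨hxs, by rw [hb]; exact EReal.bot_lt_coe c⟩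
        have hpos : 0 < f0 x := lt_of_le_of_ne (hf0nn x) (Ne.symm hxU)
        obtain ⟨n0, hn0⟩ := exists_nat_ge (2 / f0 x)
        refine tendsto_const_nhds.congr' ?_
        filter_upwards [eventually_ge_atTop n0] with n hn
        have h1 : (n0:ℝ) ≤ n := by exact_mod_cast hn
        have h2 : 2 ≤ n * f0 x := by
          rw [← div_le_iff₀ hpos]; linarith
        have : χ n x = 1 := Real.smoothTransition.one_of_one_le (by linarith)
        rw [this, mul_one]
      · have : φ x = 0 := by
          by_contra hcon
          exact hxs (hs (subset_tsupport _ hcon))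
        simp [this]
  exact le_of_tendsto' hlim key

lemma riesz_fin {u : 𝔼 → EReal} {μ : Measure 𝔼} (hμ : IsRieszMeasureOf u (ball 0 1) μ)
    {K : Set 𝔼} (hK : IsCompact K) (hs : K ⊆ ball 0 1) : μ K < ⊤ := by
  refine hK.measure_lt_top_of_nhdsWithin fun x hx => ?_
  obtain ⟨U, hU, h⟩ := hμ.2.1 x (hs hx)
  exact ⟨U, mem_nhdsWithin_of_mem_nhds hU, h⟩

lemma riesz_integrable {u : 𝔼 → EReal} {μ : Measure 𝔼} (hμ : IsRieszMeasureOf u (ball 0 1) μ)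
    {φ : 𝔼 → ℝ} (hφ : Continuous φ) (hc : HasCompactSupport φ)
    (hs : tsupport φ ⊆ ball 0 1) : Integrable φ μ := by
  obtain ⟨C, hC⟩ := hφ.bounded_above_of_compact_support hc
  have h1 : IntegrableOn φ (tsupport φ) μ :=
    Measure.integrableOn_of_bounded (M := C) (riesz_fin hμ hc hs).ne hφ.aestronglyMeasurable
      (Eventually.of_forall hC)
  exact h1.integrable_of_forall_notMem_eq_zero fun x hx => image_eq_zero_of_notMem_tsupport hx

lemma test_le2 {u v : 𝔼 → EReal} {μ ν : Measure 𝔼}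
    (hu : SubharmonicOn u (ball 0 1)) (hv : SubharmonicOn v (ball 0 1))
    (hμ : IsRieszMeasureOf u (ball 0 1) μ) (hν : IsRieszMeasureOf v (ball 0 1) ν)
    (hle : ∀ x ∈ ball (0:𝔼) 1, v x ≤ u x)
    (hpolar : μ {x | x ∈ ball (0:𝔼) 1 ∧ u x ≠ ⊥} = 0)
    {φ : 𝔼 → ℝ} (hφ : ContDiff ℝ (⊤ : ℕ∞) φ) (hc : HasCompactSupport φ)
    (hs : tsupport φ ⊆ ball 0 1) (h0 : ∀ x, 0 ≤ φ x) :
    ∫ x, φ x ∂μ ≤ ∫ x, φ x ∂ν := by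
  have hφμ := riesz_integrable hμ hφ.continuous hc hs
  have step : ∀ t : ℝ, 1 < t → ∫ x, φ x ∂μ ≤ t * ∫ x, φ x ∂ν := by
    intro t ht
    have ht0 : 0 < t := by linarith
    have hlim : Tendsto (fun k : ℕ => ∫ x in ball (0:𝔼) 1, Wf u v t k x * lap φ x) atTop
        (𝓝 (∫ x in ball (0:𝔼) 1, t * ((v x).toReal * lap φ x))) := by
      refine tendsto_integral_of_dominated_convergence
        (fun x => ‖(t * |(v x).toReal| + |(u x).toReal|) * lap φ x‖) ?_ ?_ ?_ ?_
      · intro k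
        exact (int_mul_lap hφ hc (Wf_int hu hv t k hc hs)).aestronglyMeasurable.restrict
      · refine (int_mul_lap hφ hc ?_).norm.integrableOn
        exact ((sub_int hv hc hs).abs.const_mul t).add (sub_int hu hc hs).abs
      · intro k
        refine Eventually.of_forall fun x => ?_
        rw [norm_mul, norm_mul]
        refine mul_le_mul_of_nonneg_right ?_ (norm_nonneg _)
        rw [Real.norm_eq_abs, Real.norm_eq_abs, abs_of_nonneg (a := _ + _) (by positivity)]
        have a1 : t * (v x).toReal ≤ t * |(v x).toReal| :=
          mul_le_mul_of_nonneg_left (le_abs_self _) ht0.le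
        have a2 : t * (-|(v x).toReal|) ≤ t * (v x).toReal :=
          mul_le_mul_of_nonneg_left (neg_abs_le _) ht0.le
        have a3 := le_abs_self (u x).toReal
        have a4 : 0 ≤ t * |(v x).toReal| := by positivity
        have a5 := abs_nonneg (u x).toReal
        have a6 : (0:ℝ) ≤ k := Nat.cast_nonneg k
        unfold Wf
        rw [abs_le]
        constructor
        · refine le_trans ?_ (le_max_left _ _)
          linarith
        · exact max_le (by linarith) (by linarith)
      · refine Eventually.of_forall fun x => ?_
        obtain ⟨k0, hk0⟩ := exists_nat_ge ((u x).toReal - t * (v x).toReal)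
        refine tendsto_const_nhds.congr' ?_
        filter_upwards [eventually_ge_atTop k0] with k hk
        have h1 : (k0:ℝ) ≤ k := by exact_mod_cast hk
        unfold Wf
        rw [max_eq_left (by linarith)]
        ring
    rw [integral_const_mul, hν.2.2 φ hφ hc hs] at hlim
    exact ge_of_tendsto' hlim fun k => test_le hu hv hμ hle hpolar ht hφ hc hs h0 hφμ
  have hI : 0 ≤ ∫ x, φ x ∂ν := integral_nonneg h0
  have hlim : Tendsto (fun t : ℝ => t * ∫ x, φ x ∂ν) (𝓝[>] 1) (𝓝 (1 * ∫ x, φ x ∂ν)) :=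
    ((continuous_id.mul continuous_const).tendsto 1).mono_left nhdsWithin_le_nhds
  rw [one_mul] at hlim
  exact ge_of_tendsto hlim (eventually_mem_nhdsWithin.mono fun t ht => step t ht)

lemma cpt_open_le {u v : 𝔼 → EReal} {μ ν : Measure 𝔼}
    (hu : SubharmonicOn u (ball 0 1)) (hv : SubharmonicOn v (ball 0 1))
    (hμ : IsRieszMeasureOf u (ball 0 1) μ) (hν : IsRieszMeasureOf v (ball 0 1) ν)
    (hle : ∀ x ∈ ball (0:𝔼) 1, v x ≤ u x)
    (hpolar : μ {x | x ∈ ball (0:𝔼) 1 ∧ u x ≠ ⊥} = 0)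
    {K V : Set 𝔼} (hK : IsCompact K) (hV : IsOpen V) (hKV : K ⊆ V) (hVB : V ⊆ ball 0 1) :
    μ K ≤ ν V := by
  obtain ⟨L, hL, hKL, hLV⟩ := exists_compact_between hK hV hKV
  obtain ⟨φ, hφ, hr, hsupp, h1⟩ := exists_contMDiff_support_eq_eq_one_iff
    (n := (⊤ : ℕ∞)) (modelWithCornersSelf ℝ 𝔼) (isOpen_interior (s := L)) hK.isClosed hKL
  have hφ' : ContDiff ℝ (⊤ : ℕ∞) φ := hφ.contDiff
  have htL : tsupport φ ⊆ L := by
    refine closure_minimal ?_ hL.isClosed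
    rw [hsupp]; exact interior_subset
  have hc : HasCompactSupport φ := hL.of_isClosed_subset (isClosed_tsupport _) htL
  have hs : tsupport φ ⊆ ball 0 1 := htL.trans (hLV.trans hVB)
  have h01 : ∀ x, 0 ≤ φ x ∧ φ x ≤ 1 := fun x => hr (Set.mem_range_self x)
  have hInt := test_le2 hu hv hμ hν hle hpolar hφ' hc hs fun x => (h01 x).1
  have iμ := riesz_integrable hμ hφ'.continuous hc hs
  have iν := riesz_integrable hν hφ'.continuous hc hs
  have nn : ∀ ρ : Measure 𝔼, 0 ≤ᵐ[ρ] φ := fun ρ => Eventually.of_forall fun x => (h01 x).1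
  calc μ K = ∫⁻ x, K.indicator 1 x ∂μ := (lintegral_indicator_one hK.measurableSet).symm
    _ ≤ ∫⁻ x, ENNReal.ofReal (φ x) ∂μ := by
        refine lintegral_mono fun x => ?_
        by_cases hx : x ∈ K
        · simp [hx, (h1 x).1 hx]
        · simp [hx]
    _ = ENNReal.ofReal (∫ x, φ x ∂μ) := (ofReal_integral_eq_lintegral_ofReal iμ (nn μ)).symm
    _ ≤ ENNReal.ofReal (∫ x, φ x ∂ν) := ENNReal.ofReal_le_ofReal hInt
    _ = ∫⁻ x, ENNReal.ofReal (φ x) ∂ν := ofReal_integral_eq_lintegral_ofReal iν (nn ν)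
    _ ≤ ∫⁻ x, V.indicator 1 x ∂ν := by
        refine lintegral_mono fun x => ?_
        by_cases hx : x ∈ V
        · simp [hx, (h01 x).2]
        · have : φ x = 0 := image_eq_zero_of_notMem_tsupport fun h => hx (hLV (htL h))
          simp [this]
    _ = ν V := lintegral_indicator_one hV.measurableSet

lemma main_le {u v : 𝔼 → EReal} {μ ν : Measure 𝔼}
    (hu : SubharmonicOn u (ball 0 1)) (hv : SubharmonicOn v (ball 0 1))
    (hμ : IsRieszMeasureOf u (ball 0 1) μ) (hν : IsRieszMeasureOf v (ball 0 1) ν)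
    (hle : ∀ x ∈ ball (0:𝔼) 1, v x ≤ u x)
    (hpolar : μ {x | x ∈ ball (0:𝔼) 1 ∧ u x ≠ ⊥} = 0) : μ ≤ ν := by
  have hcb : ∀ r : ℝ, r < 1 → closedBall (0:𝔼) r ⊆ ball 0 1 := fun r hr =>
    closedBall_subset_ball hr
  have hcpt : ∀ r : ℝ, r < 1 → ∀ K : Set 𝔼, IsCompact K → K ⊆ closedBall 0 r → μ K ≤ ν K := by
    intro r hr K hK hKr
    obtain ⟨r', h1, h2⟩ := exists_between hr
    have : IsFiniteMeasure (ν.restrict (ball 0 r')) := ⟨by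
      rw [Measure.restrict_apply_univ]
      exact lt_of_le_of_lt (measure_mono ball_subset_closedBall)
        (riesz_fin hν (isCompact_closedBall 0 r') (hcb r' h2))⟩
    have hKb : K ⊆ ball 0 r' := hKr.trans (closedBall_subset_ball h1)
    have e : ν K = (ν.restrict (ball 0 r')) K := by
      rw [Measure.restrict_apply hK.measurableSet, Set.inter_eq_left.2 hKb]
    rw [e]
    refine le_of_forall_gt fun a ha => ?_
    obtain ⟨V, hKV, hV, hlt⟩ := K.exists_isOpen_lt_of_lt a ha
    rw [Measure.restrict_apply hV.measurableSet] at hlt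
    exact lt_of_le_of_lt (cpt_open_le hu hv hμ hν hle hpolar hK (hV.inter isOpen_ball)
      (Set.subset_inter hKV hKb) (Set.inter_subset_right.trans (ball_subset_ball h2.le))) hlt
  have hball : ∀ r : ℝ, r < 1 → ∀ s : Set 𝔼, MeasurableSet s → μ (s ∩ closedBall 0 r) ≤ ν s := by
    intro r hr s hs
    have : IsFiniteMeasure (μ.restrict (closedBall 0 r)) := ⟨by
      rw [Measure.restrict_apply_univ]
      exact riesz_fin hμ (isCompact_closedBall 0 r) (hcb r hr)⟩
    have hm := hs.inter (measurableSet_closedBall (x := (0:𝔼)) (ε := r))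
    have e : μ (s ∩ closedBall 0 r) = (μ.restrict (closedBall 0 r)) (s ∩ closedBall 0 r) := by
      rw [Measure.restrict_apply hm, Set.inter_assoc, Set.inter_self]
    rw [e, hm.measure_eq_iSup_isCompact]
    refine iSup_le fun K => iSup_le fun hK => iSup_le fun hKc => ?_
    exact (Measure.restrict_apply_le _ _).trans ((hcpt r hr K hKc (hK.trans Set.inter_subset_right)).trans
      (measure_mono (hK.trans Set.inter_subset_left)))
  refine Measure.le_iff.2 fun s hs => ?_
  rw [hμ.1 s]
  have hU : s ∩ ball 0 1 = ⋃ n : ℕ, s ∩ closedBall (0:𝔼) (1 - 1 / ((n:ℝ) + 1)) := by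
    rw [← Set.inter_iUnion]
    congr 1
    ext x
    simp only [mem_ball_zero_iff, Set.mem_iUnion, mem_closedBall_zero_iff]
    constructor
    · intro hx
      obtain ⟨n, hn⟩ := exists_nat_one_div_lt (sub_pos.2 hx)
      exact ⟨n, by linarith⟩
    · rintro ⟨n, hn⟩
      have : 0 < 1 / ((n:ℝ) + 1) := by positivity
      linarith
  rw [hU, Monotone.measure_iUnion]
  · refine iSup_le fun n => hball _ ?_ s hs
    have : 0 < 1 / ((n:ℝ) + 1) := by positivity
    linarith
  · intro i j hij
    refine Set.inter_subset_inter_right _ (closedBall_subset_closedBall ?_)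
    have : (i:ℝ) ≤ j := by exact_mod_cast hij
    gcongr

/-- **Comparison of Riesz measures (Lemme `lemme_sousharmonique`).**
Let `B` be the open unit ball of `ℝ^m` (`m ≥ 2`) and let `u, v : B → [-∞, +∞)` be
subharmonic on `B`, with Riesz measures `Δu = μ` and `Δv = ν`. If `v ≤ u` on `B` and
`μ` gives zero mass to `{x ∈ B : u x ≠ -∞}`, then `ν ≥ μ` as measures on `B`. -/
theorem riesz_measure_comparison (hm : 2 ≤ m)
    (u v : EuclideanSpace ℝ (Fin m) → EReal)
    (μ ν : Measure (EuclideanSpace ℝ (Fin m)))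
    (hu : SubharmonicOn u (ball (0 : EuclideanSpace ℝ (Fin m)) 1))
    (hv : SubharmonicOn v (ball (0 : EuclideanSpace ℝ (Fin m)) 1))
    (hμ : IsRieszMeasureOf u (ball (0 : EuclideanSpace ℝ (Fin m)) 1) μ)
    (hν : IsRieszMeasureOf v (ball (0 : EuclideanSpace ℝ (Fin m)) 1) ν)
    (hle : ∀ x ∈ ball (0 : EuclideanSpace ℝ (Fin m)) 1, v x ≤ u x)
    (hpolar : μ {x | x ∈ ball (0 : EuclideanSpace ℝ (Fin m)) 1 ∧ u x ≠ ⊥} = 0) :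
    μ ≤ ν := by
  exact main_le hu hv hμ hν hle hpolar
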